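/- Let n ≥ 3, G = SL(n,ℝ), Γ a discrete subgroup of G, and H < G the subgroup of diagonal matrices with positive diagonal entries (and determinant 1), acting on Γ\G by right translation. Let μ be an H-invariant and H-ergodic Borel probability measure on Γ\G such that for every nontrivial one-parameter subgroup {a(t)} of H, the entropy h_μ(a(1)) of the time-one map is positive. Then Γ is a lattice and μ is the G-invariant (Haar) probability measure on Γ\G. -/

import Mathlib

open MeasureTheory ENNReal

section Entropy

variable {α : Type*} [MeasurableSpace α]

/-- `P : Fin m → Set α` is a finite measurable partition of `α` modulo `μ`-null sets. -/
def IsFinMeasPartition (μ : Measure α) {m : ℕ} (P : Fin m → Set α) : Prop :=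
  (∀ i, MeasurableSet (P i)) ∧ Pairwise (Function.onFun Disjoint P) ∧ μ (⋃ i, P i)ᶜ = 0

/-- Shannon entropy (information) of a finite family of sets with respect to `μ`. -/
noncomputable def finPartitionEntropy (μ : Measure α) {ι : Type*} [Fintype ι]
    (P : ι → Set α) : ℝ≥0∞ :=
  ENNReal.ofReal (∑ i, Real.negMulLog ((μ (P i)).toReal))

/-- The common refinement `P ∨ T⁻¹ P ∨ ⋯ ∨ T^{-(n-1)} P`, indexed by `Fin n → Fin m`. -/
def refinedPartition (T : α → α) {m : ℕ} (P : Fin m → Set α) (n : ℕ) :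
    (Fin n → Fin m) → Set α :=
  fun f => ⋂ i : Fin n, T^[(i : ℕ)] ⁻¹' P (f i)

/-- The measure-theoretic (Kolmogorov–Sinai) entropy `h_μ(T)` of a transformation `T`
preserving `μ`, defined as the supremum over all finite measurable partitions `P` of
`inf_n H_μ(P ∨ T⁻¹P ∨ ⋯ ∨ T^{-n}P)/(n+1)` (by subadditivity this infimum equals the
usual limit). -/
noncomputable def ksEntropy (T : α → α) (μ : Measure α) : ℝ≥0∞ :=
  ⨆ (m : ℕ) (P : Fin m → Set α) (_ : IsFinMeasPartition μ P),
    ⨅ n : ℕ, finPartitionEntropy μ (refinedPartition T P (n + 1)) / (n + 1 : ℝ≥0∞)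

end Entropy

open MeasureTheory

/-- `SL(n,ℝ)`. -/
abbrev SLR (n : ℕ) := Matrix.SpecialLinearGroup (Fin n) ℝ

noncomputable instance (n : ℕ) : TopologicalSpace (SLR n) :=
  TopologicalSpace.induced (fun g : SLR n => (g : Matrix (Fin n) (Fin n) ℝ)) inferInstance

/-- The homogeneous space `Γ \ SL(n,ℝ)` of right cosets. -/
abbrev XQuot {n : ℕ} (Γ : Subgroup (SLR n)) := Quotient (QuotientGroup.rightRel Γ)

noncomputable instance {n : ℕ} (Γ : Subgroup (SLR n)) : MeasurableSpace (XQuot Γ) :=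
  borel (XQuot Γ)

/-- Right translation by `g ∈ SL(n,ℝ)` on `Γ\SL(n,ℝ)`. -/
def rtQ {n : ℕ} (Γ : Subgroup (SLR n)) (g : SLR n) (x : XQuot Γ) : XQuot Γ :=
  Quotient.map' (fun h => h * g)
    (fun a b hab => by
      rw [QuotientGroup.rightRel_apply] at *
      simpa [mul_assoc] using hab) x

/-- Membership in `H`, the subgroup of diagonal matrices of `SL(n,ℝ)` with positive
diagonal entries. -/
def IsPosDiag {n : ℕ} (g : SLR n) : Prop :=
  (∀ i j, i ≠ j → (g : Matrix (Fin n) (Fin n) ℝ) i j = 0) ∧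
    ∀ i, 0 < (g : Matrix (Fin n) (Fin n) ℝ) i i


open MeasureTheory ENNReal Filter Topology

/-- A continuous right action. -/
structure RAct {G X : Type*} [Group G] [TopologicalSpace G] [TopologicalSpace X]
    (R : G → X → X) : Prop where
  one : ∀ x, R 1 x = x
  mul : ∀ g h x, R (g * h) x = R h (R g x)
  cont : Continuous fun p : X × G => R p.2 p.1

/-- continuous with compact support -/
def CC {X : Type*} [TopologicalSpace X] (f : X → ℝ) : Prop := Continuous f ∧ HasCompactSupport f

section Act
variable {G X : Type*} [Group G] [TopologicalSpace G] [TopologicalSpace X]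
  {R : G → X → X}

lemma RAct.cont_right (hR : RAct R) (g : G) : Continuous (R g) :=
  hR.cont.comp (by fun_prop : Continuous fun x : X => (x, g))

lemma RAct.cont_left (hR : RAct R) (x : X) : Continuous (fun g => R g x) :=
  hR.cont.comp (by fun_prop : Continuous fun g : G => (x, g))

lemma RAct.inv_right (hR : RAct R) (g : G) (x : X) : R g⁻¹ (R g x) = x := by
  rw [← hR.mul, mul_inv_cancel, hR.one]

lemma RAct.right_inv (hR : RAct R) (g : G) (x : X) : R g (R g⁻¹ x) = x := by
  rw [← hR.mul, inv_mul_cancel, hR.one]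

lemma RAct.iterate (hR : RAct R) (g : G) (k : ℕ) (x : X) : (R g)^[k] x = R (g ^ k) x := by
  induction k generalizing x with
  | zero => simp [hR.one]
  | succ k ih => rw [Function.iterate_succ_apply, ih, pow_succ', hR.mul]

/-- the homeomorphism -/
def RAct.homeo (hR : RAct R) (g : G) : X ≃ₜ X where
  toFun := R g
  invFun := R g⁻¹
  left_inv := hR.inv_right g
  right_inv := hR.right_inv g
  continuous_toFun := hR.cont_right g
  continuous_invFun := hR.cont_right g⁻¹

lemma CC.comp (hR : RAct R) {f : X → ℝ} (hf : CC f) (g : G) : CC (fun x => f (R g x)) :=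
  ⟨hf.1.comp (hR.cont_right g), hf.2.comp_homeomorph (hR.homeo g)⟩

lemma CC.bdd {f : X → ℝ} (hf : CC f) : ∃ C, ∀ x, |f x| ≤ C := by
  obtain ⟨C, hC⟩ := hf.1.bounded_above_of_compact_support hf.2
  exact ⟨C, by simpa using hC⟩

lemma CC.unif [ContinuousInv G] (hR : RAct R) {f : X → ℝ} (hf : CC f) {ε : ℝ} (hε : 0 < ε) :
    ∀ᶠ g in 𝓝 (1 : G), ∀ x, |f (R g x) - f x| < ε := by
  have key : ∀ᶠ g in 𝓝 (1 : G), ∀ x ∈ tsupport f, |f (R g x) - f x| < ε := by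
    have ho : IsOpen {p : X × G | |f (R p.2 p.1) - f p.1| < ε} := by
      have h1 : Continuous fun p : X × G => f (R p.2 p.1) := hf.1.comp hR.cont
      have h2 : Continuous fun p : X × G => f p.1 := hf.1.comp continuous_fst
      exact isOpen_lt (h1.sub h2).abs continuous_const
    obtain ⟨u, v, hu, hv, hsu, htv, huv⟩ := generalized_tube_lemma (s := tsupport f)
      hf.2 (t := {(1 : G)}) isCompact_singleton ho (by
        rintro ⟨x, g⟩ ⟨hx, hg⟩
        simp only [Set.mem_singleton_iff] at hg
        subst hg
        simp [hR.one, hε])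
    filter_upwards [hv.mem_nhds (htv rfl)] with g hg x hx
    exact huv (Set.mk_mem_prod (hsu hx) hg)
  have key2 : ∀ᶠ g in 𝓝 (1 : G), ∀ x ∈ tsupport f, |f (R g⁻¹ x) - f x| < ε := by
    have : Tendsto (fun g : G => g⁻¹) (𝓝 1) (𝓝 1) := by
      have := (continuous_inv (G := G)).tendsto 1
      simpa using this
    exact this.eventually key
  filter_upwards [key, key2] with g h1 h2 x
  by_cases hx : x ∈ tsupport f
  · exact h1 x hx
  by_cases hy : R g x ∈ tsupport f
  · have := h2 _ hy
    rw [hR.inv_right] at this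
    rwa [abs_sub_comm]
  · rw [image_eq_zero_of_notMem_tsupport hx, image_eq_zero_of_notMem_tsupport hy]
    simpa using hε

end Act

lemma CC.exists_dense (X : Type*) [TopologicalSpace X] [T2Space X] [LocallyCompactSpace X]
    [SecondCountableTopology X] :
    ∃ D : ℕ → X → ℝ, (∀ i, CC (D i)) ∧ ∀ f, CC f → ∀ ε > 0, ∃ i, ∀ x, |f x - D i x| < ε := by
  let E := CompactExhaustion.choice X
  have key : ∀ j : ℕ, ∃ D : ℕ → X → ℝ, (∀ i, CC (D i)) ∧ ∀ f, CC f →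
      tsupport f ⊆ E j → ∀ ε > 0, ∃ i, ∀ x, |f x - D i x| < ε := by
    intro j
    set K := E j with hKdef
    have hK : IsCompact K := E.isCompact j
    have : CompactSpace K := isCompact_iff_compactSpace.1 hK
    let Z := {f : X → ℝ // CC f ∧ tsupport f ⊆ K}
    let Φ : Z → C(K, ℝ) := fun f => ⟨fun x => f.1 x, f.2.1.1.comp continuous_subtype_val⟩
    have hsep : TopologicalSpace.IsSeparable (Set.range Φ) :=
      TopologicalSpace.IsSeparable.of_separableSpace _
    obtain ⟨c, hcr, hc, hcd⟩ := hsep.exists_countable_dense_subset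
    have zero_mem : CC (0 : X → ℝ) := ⟨continuous_const, HasCompactSupport.zero⟩
    let z0 : Z := ⟨0, zero_mem, by simp [tsupport]⟩
    have hne : c.Nonempty := by
      by_contra h
      rw [Set.not_nonempty_iff_eq_empty] at h
      have := hcd ⟨z0, rfl⟩
      simp [h] at this
    obtain ⟨e, he⟩ := hc.exists_eq_range hne
    have hch : ∀ i, ∃ z : Z, Φ z = e i := fun i => hcr (he ▸ ⟨i, rfl⟩)
    choose z hz using hch
    refine ⟨fun i => (z i).1, fun i => (z i).2.1, fun f hf hfK ε hε => ?_⟩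
    have hmem := hcd ⟨(⟨f, hf, hfK⟩ : Z), rfl⟩
    rw [Metric.mem_closure_iff] at hmem
    obtain ⟨b, hb, hdb⟩ := hmem ε hε
    rw [he] at hb
    obtain ⟨i, rfl⟩ := hb
    refine ⟨i, fun x => ?_⟩
    by_cases hx : x ∈ K
    · have := (ContinuousMap.dist_lt_iff hε).1 hdb ⟨x, hx⟩
      rw [← hz i] at this
      simpa [Real.dist_eq, Φ] using this
    · show |f x - (z i).1 x| < ε
      rw [image_eq_zero_of_notMem_tsupport (fun h => hx (hfK h)),
        image_eq_zero_of_notMem_tsupport (fun h => hx ((z i).2.2 h))]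
      simpa using hε
  choose D hD1 hD2 using key
  refine ⟨fun m => D m.unpair.1 m.unpair.2, fun i => hD1 _ _, fun f hf ε hε => ?_⟩
  obtain ⟨j, hj⟩ := E.exists_superset_of_isCompact hf.2
  obtain ⟨i, hi⟩ := hD2 j f hf hj ε hε
  exact ⟨Nat.pair j i, by simpa using hi⟩


open MeasureTheory ENNReal Filter Topology

set_option linter.unusedSectionVars false

section Erg
variable {X : Type*} [MeasurableSpace X] {μ : Measure X} [IsProbabilityMeasure μ]

lemma ae_tendsto_zero_of_lintegral {d : ℕ → X → ℝ} (hd : ∀ k, AEStronglyMeasurable (d k) μ)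
    (h : ∀ᶠ k in atTop, eLpNorm (d k) 2 μ ≤ (2⁻¹ : ℝ≥0∞) ^ k) :
    ∀ᵐ x ∂μ, Tendsto (fun k => d k x) atTop (𝓝 0) := by
  obtain ⟨k0, hk0⟩ := eventually_atTop.1 h
  have h1 : ∀ k, ∫⁻ x, ‖d (k + k0) x‖ₑ ∂μ ≤ (2⁻¹ : ℝ≥0∞) ^ k := by
    intro k
    rw [← eLpNorm_one_eq_lintegral_enorm]
    refine (eLpNorm_le_eLpNorm_of_exponent_le (by norm_num) (hd _)).trans ((hk0 _ (by omega)).trans ?_)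
    exact pow_le_pow_right_of_le_one' (by simp) (by omega)
  have h2 : ∫⁻ x, ∑' k, ‖d (k + k0) x‖ₑ ∂μ ≠ ∞ := by
    rw [lintegral_tsum (fun k => (hd _).enorm)]
    refine ne_top_of_le_ne_top ?_ (ENNReal.tsum_le_tsum h1)
    rw [ENNReal.tsum_geometric]
    simp
  have h3 := ae_lt_top' (by
    exact AEMeasurable.tsum (fun k => (hd _).enorm)) h2
  filter_upwards [h3] with x hx
  have h4 := ENNReal.tendsto_atTop_zero_of_tsum_ne_top hx.ne
  rw [← tendsto_add_atTop_iff_nat k0]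
  rw [tendsto_zero_iff_norm_tendsto_zero]
  have h5 := (ENNReal.tendsto_toReal (a := 0) (by simp)).comp h4
  simpa [Function.comp_def] using h5

lemma koopman_iterate {T : X → X} (hT : MeasurePreserving T μ μ) {f : X → ℝ} (hf : MemLp f 2 μ)
    (n : ℕ) : (Lp.compMeasurePreservingₗᵢ ℝ T hT (p := 2))^[n] (hf.toLp f)
      =ᵐ[μ] fun x => f (T^[n] x) := by
  have : (Lp.compMeasurePreservingₗᵢ ℝ T hT (p := 2))^[n] (hf.toLp f) =
      (hf.comp_measurePreserving (hT.iterate n)).toLp (f ∘ T^[n]) := by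
    induction n with
    | zero => rfl
    | succ n ih =>
      rw [Function.iterate_succ_apply', ih]
      rfl
  rw [this]
  exact MemLp.coeFn_toLp _

lemma Lp_coe_sum (F : ℕ → Lp ℝ 2 μ) (N : ℕ) :
    (∑ k ∈ Finset.range N, F k : Lp ℝ 2 μ) =ᵐ[μ] fun x => ∑ k ∈ Finset.range N, F k x := by
  induction N with
  | zero =>
    simp only [Finset.range_zero, Finset.sum_empty]
    exact Lp.coeFn_zero ℝ 2 μ
  | succ N ih =>
    rw [Finset.sum_range_succ]
    filter_upwards [Lp.coeFn_add (∑ k ∈ Finset.range N, F k) (F N), ih] with x h1 h2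
    rw [h1, Pi.add_apply, h2, Finset.sum_range_succ]

lemma koopman_avg {T : X → X} (hT : MeasurePreserving T μ μ) {f : X → ℝ} (hf : MemLp f 2 μ)
    (N : ℕ) : (birkhoffAverage ℝ (Lp.compMeasurePreservingₗᵢ ℝ T hT (p := 2)) id N (hf.toLp f) : Lp ℝ 2 μ)
      =ᵐ[μ] fun x => birkhoffAverage ℝ T f N x := by
  simp only [birkhoffAverage, birkhoffSum]
  have h1 := Lp.coeFn_smul ((N : ℝ)⁻¹) (∑ k ∈ Finset.range N, id ((Lp.compMeasurePreservingₗᵢ ℝ T hT (p := 2))^[k] (hf.toLp f)))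
  have h2 := Lp_coe_sum (μ := μ) (fun k => (Lp.compMeasurePreservingₗᵢ ℝ T hT (p := 2))^[k] (hf.toLp f)) N
  have h3 : ∀ᵐ x ∂μ, ∀ k, (Lp.compMeasurePreservingₗᵢ ℝ T hT (p := 2))^[k] (hf.toLp f) x = f (T^[k] x) :=
    ae_all_iff.2 fun k => koopman_iterate hT hf k
  filter_upwards [h1, h2, h3] with x h1 h2 h3
  rw [h1, Pi.smul_apply]
  simp only [id]
  rw [h2]
  simp [h3]

lemma erg_limit {T T' : X → X} (hT : MeasurePreserving T μ μ) (hT' : MeasurePreserving T' μ μ)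
    (hl : ∀ x, T (T' x) = x) (hr : ∀ x, T' (T x) = x) {f : X → ℝ} (hf : MemLp f 2 μ) :
    ∃ F : X → ℝ, AEStronglyMeasurable F μ ∧
      Tendsto (fun N => eLpNorm (fun x => birkhoffAverage ℝ T f N x - F x) 2 μ) atTop (𝓝 0) ∧
      Tendsto (fun N => eLpNorm (fun x => birkhoffAverage ℝ T' f N x - F x) 2 μ) atTop (𝓝 0) := by
  let U := (Lp.compMeasurePreservingₗᵢ ℝ T hT (E := ℝ) (p := 2)).toContinuousLinearMap
  let U' := (Lp.compMeasurePreservingₗᵢ ℝ T' hT' (E := ℝ) (p := 2)).toContinuousLinearMap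
  have hUU' : ∀ F, U (U' F) = F := by
    intro F
    apply Lp.ext
    have h1 := Lp.coeFn_compMeasurePreserving (U' F) hT
    have h2 := hT.quasiMeasurePreserving.ae (Lp.coeFn_compMeasurePreserving F hT')
    refine h1.trans ?_
    filter_upwards [h2] with x hx
    exact hx.trans (congrArg F (hr x))
  have hU'U : ∀ F, U' (U F) = F := by
    intro F
    apply Lp.ext
    have h1 := Lp.coeFn_compMeasurePreserving (U F) hT'
    have h2 := hT'.quasiMeasurePreserving.ae (Lp.coeFn_compMeasurePreserving F hT)
    refine h1.trans ?_
    filter_upwards [h2] with x hx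
    exact hx.trans (congrArg F (hl x))
  have hE : U.eqLocus (1 : Lp ℝ 2 μ →L[ℝ] Lp ℝ 2 μ) = U'.eqLocus (1 : Lp ℝ 2 μ →L[ℝ] Lp ℝ 2 μ) := by
    ext F
    constructor
    · intro h
      have h : U F = F := h
      show U' F = F
      conv_lhs => rw [← h]
      exact hU'U F
    · intro h
      have h : U' F = F := h
      show U F = F
      conv_lhs => rw [← h]
      exact hUU' F
  have t1 := ContinuousLinearMap.tendsto_birkhoffAverage_orthogonalProjection U
    (LinearIsometry.norm_toContinuousLinearMap_le _) (hf.toLp f)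
  have t2 := ContinuousLinearMap.tendsto_birkhoffAverage_orthogonalProjection U'
    (LinearIsometry.norm_toContinuousLinearMap_le _) (hf.toLp f)
  have hP : ∀ (S S' : Submodule ℝ (Lp ℝ 2 μ)) [S.HasOrthogonalProjection]
      [S'.HasOrthogonalProjection], S = S' → ∀ F, (S'.orthogonalProjectionOnto F : Lp ℝ 2 μ) =
      S.orthogonalProjectionOnto F := by
    intro S S' _ _ h F
    subst h
    rfl
  rw [hP _ _ hE] at t2
  refine ⟨_, Lp.aestronglyMeasurable (((U.eqLocus (1 : Lp ℝ 2 μ →L[ℝ] Lp ℝ 2 μ)).orthogonalProjectionOnto (hf.toLp f) : Lp ℝ 2 μ)), ?_, ?_⟩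
  · rw [Lp.tendsto_Lp_iff_tendsto_eLpNorm'] at t1
    refine t1.congr fun N => eLpNorm_congr_ae ?_
    filter_upwards [koopman_avg hT hf N] with x hx
    simp only [Pi.sub_apply]
    rw [← hx]; rfl
  · rw [Lp.tendsto_Lp_iff_tendsto_eLpNorm'] at t2
    refine t2.congr fun N => eLpNorm_congr_ae ?_
    filter_upwards [koopman_avg hT' hf N] with x hx
    simp only [Pi.sub_apply]
    rw [← hx]; rfl

lemma measurable_birkhoffAverage {T : X → X} (hT : Measurable T) {f : X → ℝ} (hf : Measurable f)
    (N : ℕ) : Measurable (birkhoffAverage ℝ T f N) := by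
  unfold birkhoffAverage birkhoffSum
  exact (Finset.measurable_sum _ fun k _ => hf.comp (hT.iterate k)).const_smul (c := (N : ℝ)⁻¹)

lemma erg_subseq {T T' : X → X} (hT : MeasurePreserving T μ μ) (hT' : MeasurePreserving T' μ μ)
    (hl : ∀ x, T (T' x) = x) (hr : ∀ x, T' (T x) = x) {D : ℕ → X → ℝ}
    (hD : ∀ i, Measurable (D i)) (hb : ∀ i, ∃ C, ∀ x, |D i x| ≤ C) :
    ∃ N : ℕ → ℕ, Tendsto N atTop atTop ∧ ∀ i, ∀ᵐ x ∂μ, ∃ l,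
      Tendsto (fun k => birkhoffAverage ℝ T (D i) (N k) x) atTop (𝓝 l) ∧
      Tendsto (fun k => birkhoffAverage ℝ T' (D i) (N k) x) atTop (𝓝 l) := by
  have hm : ∀ i, MemLp (D i) 2 μ := fun i => by
    obtain ⟨C, hC⟩ := hb i
    exact MemLp.of_bound (hD i).aestronglyMeasurable C (Eventually.of_forall hC)
  choose F hFm hF1 hF2 using fun i => erg_limit hT hT' hl hr (hm i)
  have hch : ∀ k : ℕ, ∃ N, k ≤ N ∧ ∀ i ≤ k,
      eLpNorm (fun x => birkhoffAverage ℝ T (D i) N x - F i x) 2 μ ≤ (2⁻¹ : ℝ≥0∞) ^ k ∧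
      eLpNorm (fun x => birkhoffAverage ℝ T' (D i) N x - F i x) 2 μ ≤ (2⁻¹ : ℝ≥0∞) ^ k := by
    intro k
    have hpos : (0 : ℝ≥0∞) < (2⁻¹ : ℝ≥0∞) ^ k := ENNReal.pow_pos (by simp) _
    have : ∀ᶠ N in atTop, ∀ i ∈ Finset.range (k+1),
      eLpNorm (fun x => birkhoffAverage ℝ T (D i) N x - F i x) 2 μ ≤ (2⁻¹ : ℝ≥0∞) ^ k ∧
      eLpNorm (fun x => birkhoffAverage ℝ T' (D i) N x - F i x) 2 μ ≤ (2⁻¹ : ℝ≥0∞) ^ k := by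
      rw [eventually_all_finset]
      intro i _
      exact ((hF1 i).eventually (ge_mem_nhds hpos)).and ((hF2 i).eventually (ge_mem_nhds hpos))
    obtain ⟨N, h1, h2⟩ := (this.and (eventually_ge_atTop k)).exists
    exact ⟨N, h2, fun i hi => h1 i (by simp; omega)⟩
  choose N hN1 hN2 using hch
  refine ⟨N, tendsto_atTop_mono hN1 tendsto_id, fun i => ?_⟩
  have a1 := ae_tendsto_zero_of_lintegral (μ := μ)
    (d := fun k x => birkhoffAverage ℝ T (D i) (N k) x - F i x)
    (fun k => (measurable_birkhoffAverage hT.measurable (hD i) _).aestronglyMeasurable.sub (hFm i))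
    (eventually_atTop.2 ⟨i, fun k hk => (hN2 k i hk).1⟩)
  have a2 := ae_tendsto_zero_of_lintegral (μ := μ)
    (d := fun k x => birkhoffAverage ℝ T' (D i) (N k) x - F i x)
    (fun k => (measurable_birkhoffAverage hT'.measurable (hD i) _).aestronglyMeasurable.sub (hFm i))
    (eventually_atTop.2 ⟨i, fun k hk => (hN2 k i hk).2⟩)
  filter_upwards [a1, a2] with x h1 h2
  exact ⟨F i x, by simpa using h1.add_const (F i x), by simpa using h2.add_const (F i x)⟩

end Erg

open MeasureTheory ENNReal Filter Topology
set_option linter.unusedSectionVars false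

section Lam
variable {G X : Type*} [Group G] [TopologicalSpace G] [IsTopologicalGroup G]
  [TopologicalSpace X] [T2Space X] [LocallyCompactSpace X] [SecondCountableTopology X]
  [MeasurableSpace X] [BorelSpace X]
  (R : G → X → X) (N : ℕ → ℕ)

/-- subsequential Birkhoff averages -/
noncomputable def Av (b : G) (f : X → ℝ) (k : ℕ) (x : X) : ℝ := birkhoffAverage ℝ (R b) f (N k) x

/-- convergence of all averages -/
def Conv (b : G) (x : X) : Prop := ∀ f, CC f → ∃ l, Tendsto (fun k => Av R N b f k x) atTop (𝓝 l)

/-- the limit functional -/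
noncomputable def Lam (b : G) (f : X → ℝ) (x : X) : ℝ := liminf (fun k => Av R N b f k x) atTop

/-- `u` is contracted by `b` -/
def Contr (b u : G) : Prop := Tendsto (fun n : ℕ => (b ^ n)⁻¹ * u * b ^ n) atTop (𝓝 1)

variable {R N} {b : G} (hR : RAct R)
include hR

lemma Av_eq (f : X → ℝ) (k : ℕ) (x : X) :
    Av R N b f k x = (N k : ℝ)⁻¹ * ∑ j ∈ Finset.range (N k), f (R (b ^ j) x) := by
  simp [Av, birkhoffAverage, birkhoffSum, hR.iterate]

lemma Av_comm {w : G} (hw : w * b = b * w) (f : X → ℝ) (k : ℕ) (x : X) :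
    Av R N b f k (R w x) = Av R N b (fun y => f (R w y)) k x := by
  rw [Av_eq hR, Av_eq hR]
  congr 1
  refine Finset.sum_congr rfl fun j _ => ?_
  rw [← hR.mul, ← hR.mul]
  have : Commute w b := hw
  rw [(this.pow_right j).eq]

lemma Av_mono {f f' : X → ℝ} (h : ∀ x, f x ≤ f' x) (k : ℕ) (x : X) :
    Av R N b f k x ≤ Av R N b f' k x := by
  rw [Av_eq hR, Av_eq hR]
  gcongr
  exact h _

lemma Av_lip {f f' : X → ℝ} {ε : ℝ} (hε : 0 ≤ ε) (h : ∀ x, |f x - f' x| ≤ ε) (k : ℕ) (x : X) :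
    |Av R N b f k x - Av R N b f' k x| ≤ ε := by
  rw [Av_eq hR, Av_eq hR, ← mul_sub, ← Finset.sum_sub_distrib, abs_mul]
  have h1 : |∑ j ∈ Finset.range (N k), (f (R (b ^ j) x) - f' (R (b ^ j) x))| ≤ N k * ε := by
    refine (Finset.abs_sum_le_sum_abs _ _).trans ?_
    refine (Finset.sum_le_sum fun j _ => h _).trans ?_
    simp
  rcases Nat.eq_zero_or_pos (N k) with h0 | h0
  · simpa [h0] using hε
  · have : (0 : ℝ) < N k := by exact_mod_cast h0
    rw [abs_of_nonneg (inv_nonneg.2 this.le)]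
    calc (N k : ℝ)⁻¹ * _ ≤ (N k : ℝ)⁻¹ * (N k * ε) := by gcongr
      _ = ε := by field_simp

lemma Av_bdd {f : X → ℝ} {C : ℝ} (hC : ∀ x, |f x| ≤ C) (k : ℕ) (x : X) :
    |Av R N b f k x| ≤ C := by
  have h0 : 0 ≤ C := (abs_nonneg _).trans (hC x)
  have := Av_lip (N := N) (b := b) hR (f := f) (f' := fun _ => 0) h0 (by simpa using hC) k x
  have h2 : Av R N b (fun _ => (0 : ℝ)) k x = 0 := by rw [Av_eq hR]; simp
  simpa [h2] using this

lemma Av_contr (hN : Tendsto N atTop atTop) {u : G} (hu : Contr b u) {f : X → ℝ} (hf : CC f)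
    (x : X) : Tendsto (fun k => Av R N b f k (R u x) - Av R N b f k x) atTop (𝓝 0) := by
  have h1 : Tendsto (fun j : ℕ => f (R (b ^ j) (R u x)) - f (R (b ^ j) x)) atTop (𝓝 0) := by
    rw [Metric.tendsto_nhds]
    intro ε hε
    filter_upwards [hu.eventually (hf.unif hR hε)] with j hj
    have := hj (R (b ^ j) x)
    rw [← hR.mul] at this
    rw [← hR.mul]
    simpa [Real.dist_eq, mul_assoc] using this
  have h2 := (h1.cesaro).comp hN
  refine h2.congr fun k => ?_
  rw [Av_eq hR, Av_eq hR, ← mul_sub, ← Finset.sum_sub_distrib]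
  rfl

lemma Av_self (hN : Tendsto N atTop atTop) {f : X → ℝ} (hf : CC f)
    (x : X) : Tendsto (fun k => Av R N b f k (R b x) - Av R N b f k x) atTop (𝓝 0) := by
  obtain ⟨C, hC⟩ := hf.bdd
  have := tendsto_birkhoffAverage_apply_sub_birkhoffAverage ℝ (f := R b) (g := f) (x := x)
    (isBounded_iff_forall_norm_le.2 ⟨C, by
      rintro _ ⟨n, rfl⟩
      exact hC _⟩)
  exact this.comp hN

lemma Conv.tendsto {x : X} (hx : Conv R N b x) {f : X → ℝ} (hf : CC f) :
    Tendsto (fun k => Av R N b f k x) atTop (𝓝 (Lam R N b f x)) := by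
  obtain ⟨l, hl⟩ := hx f hf
  have : Lam R N b f x = l := hl.liminf_eq
  rwa [this]

lemma Conv.comm {x : X} (hx : Conv R N b x) {w : G} (hw : w * b = b * w) :
    Conv R N b (R w x) := by
  intro f hf
  obtain ⟨l, hl⟩ := hx _ (hf.comp hR w)
  exact ⟨l, by simpa only [Av_comm hR hw] using hl⟩

lemma Lam_comm {w : G} (hw : w * b = b * w) (f : X → ℝ) (x : X) :
    Lam R N b f (R w x) = Lam R N b (fun y => f (R w y)) x := by
  simp only [Lam, Av_comm hR hw]

lemma Conv.of_sub {x y : X} (hx : Conv R N b x)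
    (h : ∀ f, CC f → Tendsto (fun k => Av R N b f k y - Av R N b f k x) atTop (𝓝 0)) :
    Conv R N b y ∧ ∀ f, CC f → Lam R N b f y = Lam R N b f x := by
  have key : ∀ f, CC f → Tendsto (fun k => Av R N b f k y) atTop (𝓝 (Lam R N b f x)) := by
    intro f hf
    have := (h f hf).add (hx.tendsto hR hf)
    simpa using this
  exact ⟨fun f hf => ⟨_, key f hf⟩, fun f hf => (key f hf).liminf_eq⟩

lemma Conv.contr (hN : Tendsto N atTop atTop) {x : X} (hx : Conv R N b x) {u : G}
    (hu : Contr b u) :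
    Conv R N b (R u x) ∧ ∀ f, CC f → Lam R N b f (R u x) = Lam R N b f x :=
  hx.of_sub hR fun _ hf => Av_contr hR hN hu hf x

lemma Conv.self (hN : Tendsto N atTop atTop) {x : X} (hx : Conv R N b x) :
    Conv R N b (R b x) ∧ ∀ f, CC f → Lam R N b f (R b x) = Lam R N b f x :=
  hx.of_sub hR fun _ hf => Av_self hR hN hf x

lemma Conv.mono {x : X} (hx : Conv R N b x) {f f' : X → ℝ} (hf : CC f) (hf' : CC f')
    (h : ∀ x, f x ≤ f' x) : Lam R N b f x ≤ Lam R N b f' x :=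
  le_of_tendsto_of_tendsto' (hx.tendsto hR hf) (hx.tendsto hR hf') fun k => Av_mono hR h k x

lemma Conv.lip {x : X} (hx : Conv R N b x) {f f' : X → ℝ} (hf : CC f) (hf' : CC f') {ε : ℝ}
    (hε : 0 ≤ ε) (h : ∀ x, |f x - f' x| ≤ ε) : |Lam R N b f x - Lam R N b f' x| ≤ ε :=
  le_of_tendsto' ((hx.tendsto hR hf).sub (hx.tendsto hR hf')).abs fun k => Av_lip hR hε h k x

lemma Conv.bdd {x : X} (hx : Conv R N b x) {f : X → ℝ} (hf : CC f) {C : ℝ}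
    (hC : ∀ x, |f x| ≤ C) : |Lam R N b f x| ≤ C :=
  le_of_tendsto' (hx.tendsto hR hf).abs fun k => Av_bdd hR hC k x

lemma Conv.cont {x : X} (hx : Conv R N b x) {f : X → ℝ} (hf : CC f) {w : ℝ → G}
    (hwc : Continuous w) (hw : ∀ s, w s * b = b * w s) :
    Continuous fun s => Lam R N b f (R (w s) x) := by
  rw [continuous_iff_continuousAt]
  intro s0
  rw [ContinuousAt, Metric.tendsto_nhds]
  intro ε hε
  have h1 : Tendsto (fun s => (w s0)⁻¹ * w s) (𝓝 s0) (𝓝 1) := by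
    have : Continuous fun s => (w s0)⁻¹ * w s := by fun_prop
    simpa using this.tendsto s0
  filter_upwards [h1.eventually (hf.unif hR (half_pos hε))] with s hs
  rw [Real.dist_eq, Lam_comm hR (hw s), Lam_comm hR (hw s0)]
  refine lt_of_le_of_lt (hx.lip hR (hf.comp hR _) (hf.comp hR _) (half_pos hε).le ?_) (half_lt_self hε)
  intro y
  have := hs (R (w s0) y)
  rw [← hR.mul] at this
  simpa using this.le

omit hR in
lemma meas_comp_avg (hRm : ∀ g, Measurable (R g)) {f : X → ℝ} (hf : Measurable f) (k : ℕ) :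
    Measurable (Av R N b f k) := measurable_birkhoffAverage (hRm b) hf _

lemma RAct.meas (g : G) : Measurable (R g) := (hR.cont_right g).measurable

lemma Lam_meas {f : X → ℝ} (hf : Measurable f) : Measurable (Lam R N b f) :=
  Measurable.liminf fun k => meas_comp_avg hR.meas hf k

lemma conv_of_dense {D : ℕ → X → ℝ}
    (hDd : ∀ f, CC f → ∀ ε > 0, ∃ i, ∀ x, |f x - D i x| < ε) {x : X}
    (h : ∀ i, ∃ l, Tendsto (fun k => Av R N b (D i) k x) atTop (𝓝 l)) : Conv R N b x := by
  intro f hf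
  apply cauchySeq_tendsto_of_complete
  rw [Metric.cauchySeq_iff]
  intro ε hε
  obtain ⟨i, hi⟩ := hDd f hf (ε / 3) (by linarith)
  obtain ⟨l, hl⟩ := h i
  obtain ⟨K, hK⟩ := Metric.cauchySeq_iff.1 hl.cauchySeq (ε / 3) (by linarith)
  refine ⟨K, fun m hm n hn => ?_⟩
  have h1 := Av_lip (N := N) (b := b) hR (by linarith : 0 ≤ ε / 3) (fun x => (hi x).le) m x
  have h2 := Av_lip (N := N) (b := b) hR (by linarith : 0 ≤ ε / 3) (fun x => (hi x).le) n x
  have h3 := hK m hm n hn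
  rw [Real.dist_eq] at h3 ⊢
  rw [abs_le] at h1 h2
  rw [abs_lt] at h3 ⊢
  constructor <;> linarith [h1.1, h1.2, h2.1, h2.2, h3.1, h3.2]

lemma conv_meas : MeasurableSet {x | Conv R N b x} := by
  obtain ⟨D, hD, hDd⟩ := CC.exists_dense X
  have : {x | Conv R N b x} = ⋂ i, {x | ∃ l, Tendsto (fun k => Av R N b (D i) k x) atTop (𝓝 l)} := by
    ext x
    simp only [Set.mem_setOf_eq, Set.mem_iInter]
    exact ⟨fun h i => h _ (hD i), fun h => conv_of_dense hR hDd h⟩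
  rw [this]
  exact MeasurableSet.iInter fun i =>
    measurableSet_exists_tendsto fun k => meas_comp_avg hR.meas (hD i).1.measurable k

variable (R N b) in
/-- two-sided good points -/
def BiGood (x : X) : Prop := Conv R N b x ∧ Conv R N b⁻¹ x ∧
  ∀ f, CC f → Lam R N b f x = Lam R N b⁻¹ f x

lemma bigood_iff {D : ℕ → X → ℝ} (hD : ∀ i, CC (D i))
    (hDd : ∀ f, CC f → ∀ ε > 0, ∃ i, ∀ x, |f x - D i x| < ε) (x : X) :
    BiGood R N b x ↔ Conv R N b x ∧ Conv R N b⁻¹ x ∧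
      ∀ i, Lam R N b (D i) x = Lam R N b⁻¹ (D i) x := by
  refine ⟨fun h => ⟨h.1, h.2.1, fun i => h.2.2 _ (hD i)⟩, fun h => ⟨h.1, h.2.1, fun f hf => ?_⟩⟩
  apply eq_of_forall_dist_le
  intro ε hε
  obtain ⟨i, hi⟩ := hDd f hf (ε / 2) (by linarith)
  have h1 := h.1.lip hR hf (hD i) (by linarith : 0 ≤ ε / 2) (fun x => (hi x).le)
  have h2 := h.2.1.lip hR hf (hD i) (by linarith : 0 ≤ ε / 2) (fun x => (hi x).le)
  rw [h.2.2 i] at h1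
  rw [Real.dist_eq]
  rw [abs_le] at *
  constructor <;> linarith [h1.1, h1.2, h2.1, h2.2]

lemma bigood_meas : MeasurableSet {x | BiGood R N b x} := by
  obtain ⟨D, hD, hDd⟩ := CC.exists_dense X
  have : {x | BiGood R N b x} = {x | Conv R N b x} ∩ ({x | Conv R N b⁻¹ x} ∩
      ⋂ i, {x | Lam R N b (D i) x = Lam R N b⁻¹ (D i) x}) := by
    ext x
    simp [bigood_iff hR hD hDd]
  rw [this]
  exact (conv_meas hR).inter ((conv_meas hR).inter (MeasurableSet.iInter fun i =>
    measurableSet_eq_fun (Lam_meas hR (hD i).1.measurable) (Lam_meas hR (hD i).1.measurable)))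

lemma BiGood.comm {x : X} (hx : BiGood R N b x) {w : G} (hw : w * b = b * w) :
    BiGood R N b (R w x) := by
  have hw' : w * b⁻¹ = b⁻¹ * w := by
    have : Commute w b := hw
    exact this.inv_right.eq
  refine ⟨hx.1.comm hR hw, hx.2.1.comm hR hw', fun f hf => ?_⟩
  rw [Lam_comm hR hw, Lam_comm hR hw']
  exact hx.2.2 _ (hf.comp hR w)

lemma exists_bigood {μ : Measure X} [IsProbabilityMeasure μ]
    (hb : Measure.map (R b) μ = μ) :
    ∃ N : ℕ → ℕ, Tendsto N atTop atTop ∧ ∀ᵐ x ∂μ, BiGood R N b x := by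
  obtain ⟨D, hD, hDd⟩ := CC.exists_dense X
  have hT : MeasurePreserving (R b) μ μ := ⟨hR.meas b, hb⟩
  have hT' : MeasurePreserving (R b⁻¹) μ μ := by
    refine ⟨hR.meas _, ?_⟩
    conv_lhs => rw [← hb]
    rw [Measure.map_map (hR.meas _) (hR.meas _)]
    have : R b⁻¹ ∘ R b = id := funext fun x => hR.inv_right b x
    rw [this, Measure.map_id]
  obtain ⟨N, hN, h⟩ := erg_subseq hT hT' (hR.right_inv b) (hR.inv_right b)
    (fun i => (hD i).1.measurable) (fun i => (hD i).bdd)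
  refine ⟨N, hN, ?_⟩
  filter_upwards [ae_all_iff.2 h] with x hx
  rw [bigood_iff hR hD hDd]
  refine ⟨conv_of_dense hR hDd fun i => ?_, conv_of_dense hR hDd fun i => ?_, fun i => ?_⟩
  · obtain ⟨l, h1, h2⟩ := hx i
    exact ⟨l, h1⟩
  · obtain ⟨l, h1, h2⟩ := hx i
    exact ⟨l, h2⟩
  · obtain ⟨l, h1, h2⟩ := hx i
    exact (Tendsto.liminf_eq h1).trans (Tendsto.liminf_eq h2).symm

lemma integral_Av {μ : Measure X} [IsProbabilityMeasure μ] (hb : Measure.map (R b) μ = μ)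
    {f : X → ℝ} (hf : CC f) {k : ℕ} (hk : 0 < N k) : ∫ x, Av R N b f k x ∂μ = ∫ x, f x ∂μ := by
  have hT : MeasurePreserving (R b) μ μ := ⟨hR.meas b, hb⟩
  obtain ⟨C, hC⟩ := hf.bdd
  have hi : ∀ j, Integrable (fun x => f ((R b)^[j] x)) μ := fun j =>
    Integrable.of_bound ((hf.1.measurable.comp (hR.meas b |>.iterate j)).aestronglyMeasurable) C
      (Eventually.of_forall fun x => hC _)
  have h1 : ∀ j, ∫ x, f ((R b)^[j] x) ∂μ = ∫ x, f x ∂μ := by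
    intro j
    have h2 := (hT.iterate j).map_eq
    conv_rhs => rw [← h2]
    rw [integral_map (hT.iterate j).measurable.aemeasurable hf.1.measurable.aestronglyMeasurable]
  simp only [Av, birkhoffAverage, birkhoffSum, smul_eq_mul]
  rw [integral_const_mul, integral_finsetSum _ (fun j _ => hi j)]
  simp only [h1, Finset.sum_const, Finset.card_range, nsmul_eq_mul]
  have : (N k : ℝ) ≠ 0 := by exact_mod_cast hk.ne'
  field_simp

lemma integral_Lam {μ : Measure X} [IsProbabilityMeasure μ] (hb : Measure.map (R b) μ = μ)
    (hN : Tendsto N atTop atTop) (hae : ∀ᵐ x ∂μ, Conv R N b x)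
    {f : X → ℝ} (hf : CC f) : ∫ x, Lam R N b f x ∂μ = ∫ x, f x ∂μ := by
  obtain ⟨C, hC⟩ := hf.bdd
  have h1 := tendsto_integral_of_dominated_convergence (μ := μ) (F := fun k => Av R N b f k)
    (f := Lam R N b f) (fun _ => C)
    (fun k => (meas_comp_avg hR.meas hf.1.measurable k).aestronglyMeasurable)
    (integrable_const C) (fun k => Eventually.of_forall fun x => Av_bdd hR hC k x)
    (by filter_upwards [hae] with x hx using hx.tendsto hR hf)
  refine tendsto_nhds_unique h1 (tendsto_const_nhds.congr' ?_)
  filter_upwards [hN.eventually (eventually_gt_atTop 0)] with k hk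
  exact (integral_Av hR hb hf hk).symm

end Lam

lemma meas_exists_compact {X : Type*} [MeasurableSpace X] {X0 : Set X} (hX0 : MeasurableSet X0)
    {C : Set ℝ} (hC : IsCompact C) (g : ℕ → X → ℝ → ℝ) (hm : ∀ i s, Measurable fun x => g i x s)
    (hc : ∀ x ∈ X0, ∀ i, Continuous (g i x)) :
    MeasurableSet {x | x ∈ X0 ∧ ∃ s ∈ C, ∀ i, 0 ≤ g i x s} := by
  obtain ⟨c, hcC, hcc, hcd⟩ := (TopologicalSpace.IsSeparable.of_separableSpace C).exists_countable_dense_subset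
  have : {x | x ∈ X0 ∧ ∃ s ∈ C, ∀ i, 0 ≤ g i x s} =
      X0 ∩ ⋂ k : ℕ, ⋃ s ∈ c, ⋂ i ∈ Finset.range k, {x | -(1 / (k + 1 : ℝ)) < g i x s} := by
    ext x
    simp only [Set.mem_setOf_eq, Set.mem_inter_iff, Set.mem_iInter, Set.mem_iUnion]
    refine and_congr_right fun hx => ⟨?_, ?_⟩
    · rintro ⟨s, hs, hg⟩ k
      have ho : IsOpen (⋂ i ∈ Finset.range k, {t | -(1 / (k + 1 : ℝ)) < g i x t}) :=
        isOpen_biInter_finset fun i _ => isOpen_lt continuous_const (hc x hx i)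
      have hsm : s ∈ (⋂ i ∈ Finset.range k, {t | -(1 / (k + 1 : ℝ)) < g i x t}) := by
        simp only [Set.mem_iInter]
        intro i _
        have : (0 : ℝ) < 1 / (k + 1 : ℝ) := by positivity
        exact lt_of_lt_of_le (by linarith) (hg i)
      obtain ⟨t, ht1, ht2⟩ := mem_closure_iff.1 (hcd hs) _ ho hsm
      refine ⟨t, ht2, fun i hi => ?_⟩
      simp only [Set.mem_iInter] at ht1
      exact ht1 i hi
    · intro h
      choose t ht1 ht2 using h
      obtain ⟨s, hs, φ, hφ, hφs⟩ := hC.tendsto_subseq (fun k => hcC (ht1 k))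
      refine ⟨s, hs, fun i => ?_⟩
      have h1 : Tendsto (fun k => g i x (t (φ k))) atTop (𝓝 (g i x s)) :=
        ((hc x hx i).tendsto s).comp hφs
      have h2 : Tendsto (fun k : ℕ => -(1 / ((φ k : ℝ) + 1))) atTop (𝓝 (-0)) :=
        (tendsto_one_div_add_atTop_nhds_zero_nat (𝕜 := ℝ)).neg.comp hφ.tendsto_atTop
      rw [neg_zero] at h2
      refine le_of_tendsto_of_tendsto h2 h1 ?_
      filter_upwards [eventually_gt_atTop i] with k hk
      exact (ht2 (φ k) i (Finset.mem_range.2 (lt_of_lt_of_le hk hφ.le_apply))).le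
  rw [this]
  refine hX0.inter (MeasurableSet.iInter fun k => MeasurableSet.biUnion hcc fun s _ =>
    Finset.measurableSet_biInter _ fun i _ => measurableSet_lt measurable_const (hm i s))

open MeasureTheory ENNReal Filter Topology
set_option linter.unusedSectionVars false

section C1
variable {G X : Type*} [Group G] [TopologicalSpace G] [IsTopologicalGroup G]
  [TopologicalSpace X] [T2Space X] [LocallyCompactSpace X] [SecondCountableTopology X]
  [MeasurableSpace X] [BorelSpace X]
  {R : G → X → X} {N : ℕ → ℕ} {b : G}

variable (R N b) in
/-- stabiliser times of the limit functional -/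
def Stab (w : ℝ → G) (x : X) : Set ℝ :=
  {s | ∀ f, CC f → Lam R N b f (R (w s) x) = Lam R N b f x}

lemma stab_iff (hR : RAct R) {D : ℕ → X → ℝ} (hD : ∀ i, CC (D i))
    (hDd : ∀ f, CC f → ∀ ε > 0, ∃ i, ∀ x, |f x - D i x| < ε)
    {w : ℝ → G} (hwb : ∀ s, w s * b = b * w s) {x : X} (hx : Conv R N b x) (s : ℝ) :
    s ∈ Stab R N b w x ↔ ∀ i, Lam R N b (D i) (R (w s) x) = Lam R N b (D i) x := by
  refine ⟨fun h i => h _ (hD i), fun h f hf => ?_⟩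
  apply eq_of_forall_dist_le
  intro ε hε
  obtain ⟨i, hi⟩ := hDd f hf (ε / 2) (by linarith)
  have h1 := hx.lip hR hf (hD i) (by linarith) fun y => (hi y).le
  have h2 := (hx.comm hR (hwb s)).lip hR hf (hD i) (by linarith) fun y => (hi y).le
  rw [h i] at h2
  rw [Real.dist_eq]
  rw [abs_le] at *
  constructor <;> linarith [h1.1, h1.2, h2.1, h2.2]

lemma stab_closed (hR : RAct R) {w : ℝ → G} (hwc : Continuous w)
    (hwb : ∀ s, w s * b = b * w s) {x : X} (hx : Conv R N b x) :
    IsClosed (Stab R N b w x) := by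
  have : Stab R N b w x = ⋂ f, ⋂ (_ : CC f), {s | Lam R N b f (R (w s) x) = Lam R N b f x} := by
    ext s; simp [Stab]
  rw [this]
  refine isClosed_iInter fun f => isClosed_iInter fun hf => ?_
  exact isClosed_eq (hx.cont hR hf hwc hwb) continuous_const

lemma stab_scale (hR : RAct R) {w : ℝ → G} (hwb : ∀ s, w s * b = b * w s) {h : G}
    (hh : h * b = b * h) {l : ℝ} (hl : ∀ s, w s * h = h * w (l * s)) {x : X} {s : ℝ}
    (hs : s ∈ Stab R N b w x) : l * s ∈ Stab R N b w (R h x) := by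
  intro f hf
  rw [← hR.mul, ← hl, hR.mul, Lam_comm hR hh, Lam_comm hR hh]
  exact hs _ (hf.comp hR h)

variable (R N b) in
/-- the stabiliser as a subgroup -/
def stabGroup (hR : RAct R) {w : ℝ → G} (hw : ∀ s t, w (s + t) = w s * w t)
    (hwb : ∀ s, w s * b = b * w s) (x : X) : AddSubgroup ℝ where
  carrier := Stab R N b w x
  zero_mem' := by
    have h0 : w 0 = 1 := by have := hw 0 0; simpa using this
    intro f hf
    rw [h0, hR.one]
  add_mem' := by
    intro s t hs ht f hf
    rw [hw, hR.mul, Lam_comm hR (hwb t), hs _ (hf.comp hR _), ← Lam_comm hR (hwb t), ht f hf]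
  neg_mem' := by
    intro s hs f hf
    have h0 : w 0 = 1 := by have := hw 0 0; simpa using this
    have h1 : w (-s) * w s = 1 := by rw [← hw]; simp [h0]
    have h2 : w s * w (-s) = 1 := by rw [← hw]; simp [h0]
    rw [Lam_comm hR (hwb _), ← hs _ (hf.comp hR (w (-s))), ← Lam_comm hR (hwb _), ← hR.mul, h2,
      hR.one]

theorem lemC1 (hR : RAct R) {μ : Measure X} [IsProbabilityMeasure μ] {w : ℝ → G}
    (hwc : Continuous w) (hw : ∀ s t, w (s + t) = w s * w t)
    (hwb : ∀ s, w s * b = b * w s) (H : Subgroup G) (hbH : b ∈ H)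
    (hHb : ∀ h ∈ H, h * b = b * h)
    (hinv : ∀ h ∈ H, Measure.map (R h) μ = μ)
    (herg : ∀ A : Set X, MeasurableSet A → (∀ h ∈ H, R h ⁻¹' A = A) → μ A = 0 ∨ μ A = 1)
    (hsc : ∀ h ∈ H, ∃ l : ℝ, 0 < l ∧ ∀ s, w s * h = h * w (l * s))
    (hsc2 : ∀ l : ℝ, 0 < l → ∃ h ∈ H, ∀ s, w s * h = h * w (l * s)) :
    (∀ s, Measure.map (R (w s)) μ = μ) ∨ ∃ X' : Set X, MeasurableSet X' ∧ μ X'ᶜ = 0 ∧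
      (∀ h ∈ H, ∀ x ∈ X', R h x ∈ X') ∧
      ∀ z ∈ X', ∀ u v s, Contr b u → Contr b⁻¹ v → u * v = v * u * w s →
        R u z ∈ X' → R v z ∈ X' → R u (R v z) ∈ X' → s = 0 := by
  obtain ⟨N, hN, hae⟩ := exists_bigood hR (hinv b hbH)
  obtain ⟨D, hD, hDd⟩ := CC.exists_dense X
  have hBm : MeasurableSet {x | BiGood R N b x} := bigood_meas hR
  let A : ℝ → Set X := fun M => {x | BiGood R N b x ∧ ∃ s, 0 < s ∧ s ≤ M ∧ s ∈ Stab R N b w x}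
  have hAm : ∀ M, MeasurableSet (A M) := by
    intro M
    have : A M = ⋃ r : ℕ, {x | x ∈ {x | BiGood R N b x} ∧ ∃ s ∈ Set.Icc (1 / (r + 1 : ℝ)) M,
        ∀ i, 0 ≤ -|Lam R N b (D i) (R (w s) x) - Lam R N b (D i) x|} := by
      ext x
      simp only [A, Set.mem_ofPred_eq, Set.mem_iUnion]
      constructor
      · rintro ⟨hx, s, h0, h1, h2⟩
        obtain ⟨r, hr⟩ := exists_nat_one_div_lt h0
        refine ⟨r, hx, s, ⟨hr.le, h1⟩, fun i => ?_⟩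
        rw [h2 _ (hD i)]; simp
      · rintro ⟨r, hx, s, ⟨h0, h1⟩, h2⟩
        refine ⟨hx, s, lt_of_lt_of_le (by positivity) h0, h1, ?_⟩
        rw [stab_iff hR hD hDd hwb hx.1]
        intro i
        have h3 := h2 i
        have h4 := abs_nonneg (Lam R N b (D i) (R (w s) x) - Lam R N b (D i) x)
        exact sub_eq_zero.1 (abs_eq_zero.1 (by linarith))
    rw [this]
    refine MeasurableSet.iUnion fun r => meas_exists_compact hBm isCompact_Icc
      (fun i x s => -|Lam R N b (D i) (R (w s) x) - Lam R N b (D i) x|) ?_ ?_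
    · intro i s
      have h1 : Measurable (Lam R N b (D i)) := Lam_meas hR (hD i).1.measurable
      exact ((h1.comp (hR.meas (w s))).sub h1).abs.neg
    · intro x hx i
      exact (((show BiGood R N b x from hx).1.cont hR (hD i) hwc hwb).sub continuous_const).abs.neg
  have hmono : ∀ M M', M ≤ M' → A M ⊆ A M' := fun M M' h x ⟨hx, s, h0, h1, h2⟩ =>
    ⟨hx, s, h0, h1.trans h, h2⟩
  have hAle : ∀ M M', 0 < M → 0 < M' → μ (A M) ≤ μ (A M') := by
    intro M M' hM hM'
    obtain ⟨h, hH, hl⟩ := hsc2 (M' / M) (by positivity)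
    have : A M ⊆ R h ⁻¹' A M' := by
      rintro x ⟨hx, s, h0, h1, h2⟩
      refine ⟨hx.comm hR (hHb h hH), M' / M * s, by positivity, ?_,
        stab_scale hR hwb (hHb h hH) hl h2⟩
      rw [div_mul_eq_mul_div, div_le_iff₀ hM]
      gcongr
    calc μ (A M) ≤ μ (R h ⁻¹' A M') := measure_mono this
      _ = μ (A M') := by
        rw [← Measure.map_apply (hR.meas h) (hAm M'), hinv h hH]
  have hAeq : ∀ M, 0 < M → μ (A M) = μ (A 1) := fun M hM =>
    le_antisymm (hAle _ _ hM one_pos) (hAle _ _ one_pos hM)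
  let F : Set X := ⋃ k : ℕ, A (k + 1)
  have hFm : MeasurableSet F := MeasurableSet.iUnion fun k => hAm _
  have hFμ : μ F = μ (A 1) := by
    have : Monotone fun k : ℕ => A ((k : ℝ) + 1) := fun a c hac => hmono _ _ (by
      have : (a : ℝ) ≤ c := by exact_mod_cast hac
      linarith)
    have h1 := tendsto_measure_iUnion_atTop (μ := μ) this
    have h2 : (⇑μ ∘ fun k : ℕ => A ((k : ℝ) + 1)) = fun _ => μ (A 1) := by
      ext k; exact hAeq _ (by positivity)
    rw [h2] at h1
    exact tendsto_nhds_unique h1 tendsto_const_nhds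
  let Fu : Set X := ⋂ k : ℕ, A (1 / (k + 1))
  have hFum : MeasurableSet Fu := MeasurableSet.iInter fun k => hAm _
  have hFuμ : μ Fu = μ (A 1) := by
    have : Antitone fun k : ℕ => A (1 / ((k : ℝ) + 1)) := fun a c hac => hmono _ _ (by
      have : (a : ℝ) ≤ c := by exact_mod_cast hac
      gcongr)
    have h1 := tendsto_measure_iInter_atTop (μ := μ)
      (fun k : ℕ => (hAm (1 / ((k : ℝ) + 1))).nullMeasurableSet) this ⟨0, measure_ne_top _ _⟩
    have h2 : (⇑μ ∘ fun k : ℕ => A (1 / ((k : ℝ) + 1))) = fun _ => μ (A 1) := by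
      ext k; exact hAeq _ (by positivity)
    rw [h2] at h1
    exact tendsto_nhds_unique h1 tendsto_const_nhds
  have hFu : ∀ x ∈ Fu, ∀ s, s ∈ Stab R N b w x := by
    intro x hx s
    have hx' : ∀ k : ℕ, x ∈ A (1 / (k + 1)) := by simpa [Fu] using hx
    have hB : BiGood R N b x := (hx' 0).1
    have hcl := stab_closed hR hwc hwb hB.1
    have hd : Dense (stabGroup R N b hR hw hwb x : Set ℝ) := by
      apply AddSubgroup.dense_of_not_isolated_zero
      intro ε hε
      obtain ⟨k, hk⟩ := exists_nat_one_div_lt hε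
      obtain ⟨-, s, h0, h1, h2⟩ := hx' k
      exact ⟨s, h2, h0, lt_of_le_of_lt h1 hk⟩
    have : closure (Stab R N b w x) = Set.univ := hd.closure_eq
    rw [hcl.closure_eq] at this
    rw [this]; trivial
  have hFF : ∀ x, x ∈ F ↔ BiGood R N b x ∧ ∃ s, s ≠ 0 ∧ s ∈ Stab R N b w x := by
    intro x
    simp only [F, A, Set.mem_iUnion, Set.mem_ofPred_eq]
    constructor
    · rintro ⟨k, hx, s, h0, -, h⟩
      exact ⟨hx, s, h0.ne', h⟩
    · rintro ⟨hx, s, h0, h⟩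
      have h' : |s| ∈ Stab R N b w x := by
        rcases abs_choice s with h1 | h1
        · rwa [h1]
        · rw [h1]; exact (stabGroup R N b hR hw hwb x).neg_mem h
      obtain ⟨k, hk⟩ := exists_nat_gt |s|
      exact ⟨k, hx, |s|, abs_pos.2 h0, by linarith, h'⟩
  have hFH1 : ∀ h ∈ H, ∀ x, x ∈ F → R h x ∈ F := by
    intro h hh x hx
    rw [hFF] at hx ⊢
    obtain ⟨hx, s, h0, hs⟩ := hx
    obtain ⟨l, hl0, hl⟩ := hsc h hh
    exact ⟨hx.comm hR (hHb h hh), l * s, mul_ne_zero hl0.ne' h0,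
      stab_scale hR hwb (hHb h hh) hl hs⟩
  have hFH : ∀ h ∈ H, R h ⁻¹' F = F := by
    intro h hh
    ext x
    refine ⟨fun hx => ?_, hFH1 h hh x⟩
    have := hFH1 h⁻¹ (H.inv_mem hh) _ hx
    rwa [hR.inv_right] at this
  rcases herg F hFm hFH with h0 | h1
  · right
    refine ⟨{x | BiGood R N b x} \ F, hBm.diff hFm, ?_, ?_, ?_⟩
    · have : ∀ᵐ x ∂μ, x ∉ F := measure_eq_zero_iff_ae_notMem.1 h0
      have h3 : ∀ᵐ x ∂μ, x ∈ {x | BiGood R N b x} \ F := by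
        filter_upwards [this, hae] with x h4 h5 using ⟨h5, h4⟩
      exact h3
    · rintro h hh x ⟨hx, hxF⟩
      refine ⟨BiGood.comm hR hx (hHb h hh), fun h' => hxF ?_⟩
      rw [← hFH h hh]; exact h'
    · rintro z ⟨hz : BiGood R N b z, hzF⟩ u v s hu hv huv ⟨hzu : BiGood R N b _, -⟩
        ⟨hzv : BiGood R N b _, -⟩ ⟨hzvu : BiGood R N b _, -⟩
      by_contra hs0
      apply hzF
      rw [hFF]
      refine ⟨hz, s, hs0, fun f hf => ?_⟩
      have hwb' : w s * b⁻¹ = b⁻¹ * w s := (show Commute (w s) b from hwb s).inv_right.eq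
      have hfw := hf.comp hR (w s)
      have e1 : Lam R N b f z = Lam R N b⁻¹ f (R u z) := by
        rw [← hzu.2.2 f hf, (hz.1.contr hR hN hu).2 f hf]
      have e2 : Lam R N b⁻¹ f (R u z) = Lam R N b⁻¹ f (R (w s) (R u (R v z))) := by
        rw [← (hzu.2.1.contr hR hN hv).2 f hf, ← hR.mul, huv, hR.mul, hR.mul]
      rw [e1, e2, Lam_comm hR hwb', ← hzvu.2.2 _ hfw, (hzv.1.contr hR hN hu).2 _ hfw,
        hzv.2.2 _ hfw, (hz.2.1.contr hR hN hv).2 _ hfw, ← hz.2.2 _ hfw, Lam_comm hR (hwb s)]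
  · left
    intro s
    have hFu1 : ∀ᵐ x ∂μ, x ∈ Fu := by
      rw [← prob_compl_eq_zero_iff hFm] at h1
      have : μ Fu = 1 := by
        rw [hFuμ, ← hFμ]; rwa [prob_compl_eq_zero_iff hFm] at h1
      rwa [← prob_compl_eq_zero_iff hFum] at this
    have hc : ∀ᵐ x ∂μ, Conv R N b x := hae.mono fun x hx => hx.1
    have hmp : IsProbabilityMeasure (Measure.map (R (w s)) μ) :=
      Measure.isProbabilityMeasure_map (hR.meas _).aemeasurable
    apply Measure.ext_of_integral_eq_on_compactlySupported
    intro f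
    have hf : CC (f : X → ℝ) := ⟨f.continuous, f.hasCompactSupport⟩
    rw [integral_map (hR.meas _).aemeasurable hf.1.measurable.aestronglyMeasurable]
    rw [← integral_Lam hR (hinv b hbH) hN hc hf,
      ← integral_Lam hR (hinv b hbH) hN hc (hf.comp hR (w s))]
    apply integral_congr_ae
    filter_upwards [hFu1] with x hx
    rw [← Lam_comm hR (hwb s)]
    exact hFu x hx s f hf
end C1

open MeasureTheory ENNReal Filter Topology
set_option linter.unusedSectionVars false
set_option linter.unusedVariables false

section C2
variable {G X : Type*} [Group G] [TopologicalSpace G] [IsTopologicalGroup G]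
  [TopologicalSpace X] [T2Space X] [LocallyCompactSpace X] [SecondCountableTopology X]
  [MeasurableSpace X] [BorelSpace X]
  {R : G → X → X} {N : ℕ → ℕ} {c : G}

variable (R N c) in
/-- the limit functional gives mass at least `1 - ε` to `K` -/
def GoodK (ε : ℝ) (K : Set X) (x : X) : Prop := ∀ f, CC f → ∀ η : ℝ,
  (∀ y, K.indicator (fun _ => (1 : ℝ)) y ≤ f y + η) → 1 - ε - η ≤ Lam R N c f x

lemma GoodK.mono {ε : ℝ} {K K' : Set X} (h : K ⊆ K') {x : X} (hx : GoodK R N c ε K x) :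
    GoodK R N c ε K' x := by
  intro f hf η hη
  refine hx f hf η fun y => le_trans ?_ (hη y)
  exact Set.indicator_le_indicator_of_subset h (fun _ => zero_le_one) y

lemma GoodK.congr {ε : ℝ} {K : Set X} {x x' : X} (h : ∀ f, CC f → Lam R N c f x' = Lam R N c f x)
    (hx : GoodK R N c ε K x) : GoodK R N c ε K x' := by
  intro f hf η hη
  rw [h f hf]
  exact hx f hf η hη

lemma GoodK.shift (hR : RAct R) {ε : ℝ} {K K' : Set X} {h : G} (hh : h * c = c * h)
    (hK : ∀ x ∈ K, R h x ∈ K') {x : X} (hx : GoodK R N c ε K x) :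
    GoodK R N c ε K' (R h x) := by
  intro f hf η hη
  rw [Lam_comm hR hh]
  refine hx _ (hf.comp hR h) η fun y => le_trans ?_ (hη (R h y))
  by_cases hy : y ∈ K
  · simp [hy, hK y hy]
  · rw [Set.indicator_of_notMem hy]
    exact Set.indicator_nonneg (fun _ _ => zero_le_one) _

lemma goodK_iff (hR : RAct R) {D : ℕ → X → ℝ} (hD : ∀ i, CC (D i))
    (hDd : ∀ f, CC f → ∀ ε > 0, ∃ i, ∀ x, |f x - D i x| < ε) {ε : ℝ} {K : Set X} {x : X}
    (hx : Conv R N c x) : GoodK R N c ε K x ↔ ∀ i, ∀ q : ℚ,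
      (∀ y, K.indicator (fun _ => (1 : ℝ)) y ≤ D i y + q) → 1 - ε - q ≤ Lam R N c (D i) x := by
  refine ⟨fun h i q hq => h _ (hD i) q hq, fun h f hf η hη => ?_⟩
  apply _root_.le_of_forall_pos_le_add
  intro θ hθ
  obtain ⟨i, hi⟩ := hDd f hf (θ / 3) (by linarith)
  obtain ⟨q, hq1, hq2⟩ := exists_rat_btwn (show η + θ / 3 < η + 2 * (θ / 3) by linarith)
  have h1 := h i q fun y => by
    have := abs_lt.1 (hi y)
    linarith [hη y, this.1, this.2]
  have h2 := abs_le.1 (hx.lip hR hf (hD i) (by linarith) fun y => (hi y).le)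
  linarith [h2.1, h2.2]

/-- good times -/
lemma goodtimes_meas (hR : RAct R) {u : ℝ → G} (huc : Continuous u)
    (huC : ∀ s, u s * c = c * u s) (ε : ℝ) (K : Set X) {C : Set ℝ} (hC : IsCompact C) :
    MeasurableSet {z | Conv R N c z ∧ ∃ s ∈ C, GoodK R N c ε K (R (u s) z)} := by
  classical
  obtain ⟨D, hD, hDd⟩ := CC.exists_dense X
  obtain ⟨e, he⟩ := exists_surjective_nat (ℕ × ℚ)
  have : {z | Conv R N c z ∧ ∃ s ∈ C, GoodK R N c ε K (R (u s) z)} =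
      {z | z ∈ {z | Conv R N c z} ∧ ∃ s ∈ C, ∀ i, 0 ≤
        if (∀ y, K.indicator (fun _ => (1 : ℝ)) y ≤ D (e i).1 y + (e i).2) then
          Lam R N c (D (e i).1) (R (u s) z) - (1 - ε - (e i).2) else 0} := by
    ext z
    simp only [Set.mem_ofPred_eq]
    refine and_congr_right fun hz => exists_congr fun s => and_congr_right fun hs => ?_
    rw [goodK_iff hR hD hDd (hz.comm hR (huC s))]
    constructor
    · intro h i
      split_ifs with h1
      · have := h _ _ h1; linarith
      · exact le_rfl
    · intro h i q hq
      obtain ⟨k, hk⟩ := he (i, q)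
      have := h k
      rw [hk, if_pos hq] at this
      simp only at this
      linarith
  rw [this]
  refine meas_exists_compact (conv_meas hR) hC (fun i z s =>
        if (∀ y, K.indicator (fun _ => (1 : ℝ)) y ≤ D (e i).1 y + (e i).2) then
          Lam R N c (D (e i).1) (R (u s) z) - (1 - ε - (e i).2) else 0) ?_ ?_
  · intro i s
    split_ifs
    · exact ((Lam_meas hR (hD _).1.measurable).comp (hR.meas (u s))).sub measurable_const
    · exact measurable_const
  · intro x hx i
    have hx : Conv R N c x := hx
    split_ifs
    · exact (hx.cont hR (hD _) huc huC).sub continuous_const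
    · exact continuous_const

lemma goodtimes_closed (hR : RAct R) {u : ℝ → G} (huc : Continuous u)
    (huC : ∀ s, u s * c = c * u s) (ε : ℝ) (K : Set X) {z : X} (hz : Conv R N c z) :
    IsClosed {s | GoodK R N c ε K (R (u s) z)} := by
  have : {s | GoodK R N c ε K (R (u s) z)} = ⋂ f, ⋂ (_ : CC f), ⋂ η : ℝ,
      ⋂ (_ : ∀ y, K.indicator (fun _ => (1 : ℝ)) y ≤ f y + η),
      {s | 1 - ε - η ≤ Lam R N c f (R (u s) z)} := by
    ext s; simp [GoodK]
  rw [this]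
  exact isClosed_iInter fun f => isClosed_iInter fun hf => isClosed_iInter fun η =>
    isClosed_iInter fun hη => isClosed_le continuous_const (hz.cont hR hf huc huC)

lemma ae_goodK (hR : RAct R) {μ : Measure X} [IsProbabilityMeasure μ]
    (hc : Measure.map (R c) μ = μ) (hN : Tendsto N atTop atTop)
    (hae : ∀ᵐ x ∂μ, Conv R N c x) {ε : ℝ} (hε : 0 < ε) {K : ℕ → Set X}
    (hKm : ∀ m, MeasurableSet (K m))
    (hK : Tendsto (fun m => μ (K m)ᶜ) atTop (𝓝 0)) :
    ∀ᵐ x ∂μ, ∃ m, GoodK R N c ε (K m) x := by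
  have hT : MeasurePreserving (R c) μ μ := ⟨hR.meas c, hc⟩
  let g : ℕ → X → ℝ := fun m => (K m)ᶜ.indicator fun _ => 1
  have hgm : ∀ m, Measurable (g m) := fun m => measurable_const.indicator (hKm m).compl
  have hg0 : ∀ m x, 0 ≤ g m x := fun m x => Set.indicator_nonneg (fun _ _ => zero_le_one) _
  have hAm : ∀ m k, Measurable (Av R N c (g m) k) := fun m k => meas_comp_avg hR.meas (hgm m) k
  have hint : ∀ m k, 0 < N k → ∫⁻ x, ENNReal.ofReal (Av R N c (g m) k x) ∂μ = μ (K m)ᶜ := by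
    intro m k hk
    have h1 : ∀ j, ∫⁻ x, ENNReal.ofReal (g m (R (c ^ j) x)) ∂μ = μ (K m)ᶜ := by
      intro j
      have h2 : ∀ x, ENNReal.ofReal (g m (R (c ^ j) x)) =
          ((R c)^[j] ⁻¹' (K m)ᶜ).indicator (fun _ => (1 : ℝ≥0∞)) x := by
        intro x
        rw [← hR.iterate]
        by_cases hx : (R c)^[j] x ∈ K m <;> simp [g, hx]
      simp_rw [h2]
      rw [lintegral_indicator_const ((hT.measurable.iterate j) (hKm m).compl), one_mul,
        (hT.iterate j).measure_preimage (hKm m).compl.nullMeasurableSet]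
    have h3 : ∀ x, ENNReal.ofReal (Av R N c (g m) k x) =
        ENNReal.ofReal (N k : ℝ)⁻¹ * ∑ j ∈ Finset.range (N k), ENNReal.ofReal (g m (R (c ^ j) x)) := by
      intro x
      rw [Av_eq hR, ENNReal.ofReal_mul (by positivity), ENNReal.ofReal_sum_of_nonneg]
      intro i _; exact hg0 _ _
    simp_rw [h3]
    have hmj : ∀ j, Measurable fun x => ENNReal.ofReal (g m (R (c ^ j) x)) := fun j =>
      ((hgm m).comp (hR.meas _)).ennreal_ofReal
    rw [lintegral_const_mul _ (Finset.measurable_fun_sum _ fun j _ => hmj j),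
      lintegral_finsetSum _ (fun j _ => hmj j)]
    simp_rw [h1]
    rw [Finset.sum_const, Finset.card_range, nsmul_eq_mul, ← mul_assoc,
      ENNReal.ofReal_inv_of_pos (by exact_mod_cast hk), ENNReal.ofReal_natCast,
      ENNReal.inv_mul_cancel (by exact_mod_cast hk.ne') (by simp), one_mul]
  let L : ℕ → X → ℝ≥0∞ := fun m x => liminf (fun k => ENNReal.ofReal (Av R N c (g m) k x)) atTop
  have hL : ∀ m, ∫⁻ x, L m x ∂μ ≤ μ (K m)ᶜ := by
    intro m
    refine (lintegral_liminf_le fun k => (hAm m k).ennreal_ofReal).trans ?_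
    have : (fun k => ∫⁻ x, ENNReal.ofReal (Av R N c (g m) k x) ∂μ) =ᶠ[atTop] fun _ => μ (K m)ᶜ := by
      filter_upwards [hN.eventually_gt_atTop 0] with k hk using hint m k hk
    rw [liminf_congr this]
    simp
  have hLm : ∀ m, Measurable (L m) := fun m => Measurable.liminf fun k => (hAm m k).ennreal_ofReal
  have hM : ∀ m, μ {x | ENNReal.ofReal ε ≤ L m x} ≤ μ (K m)ᶜ / ENNReal.ofReal ε := by
    intro m
    refine (meas_ge_le_lintegral_div (hLm m).aemeasurable (by simpa using hε) (by simp)).trans ?_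
    exact ENNReal.div_le_div_right (hL m) _
  have hnull : μ {x | ∀ m, ENNReal.ofReal ε ≤ L m x} = 0 := by
    have h1 : Tendsto (fun m => μ (K m)ᶜ / ENNReal.ofReal ε) atTop (𝓝 (0 / ENNReal.ofReal ε)) :=
      ENNReal.Tendsto.div_const hK (Or.inr (by simpa using hε))
    rw [ENNReal.zero_div] at h1
    refine le_antisymm (ge_of_tendsto' h1 fun m => ?_) zero_le
    have hsub : {x | ∀ m, ENNReal.ofReal ε ≤ L m x} ⊆ {x | ENNReal.ofReal ε ≤ L m x} :=
      fun x hx => (show ∀ m, ENNReal.ofReal ε ≤ L m x from hx) m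
    exact (measure_mono hsub).trans (hM m)
  have hnull' : ∀ᵐ x ∂μ, ¬ ∀ m, ENNReal.ofReal ε ≤ L m x := measure_eq_zero_iff_ae_notMem.1 hnull
  filter_upwards [hnull', hae] with x hx hcx
  push Not at hx
  obtain ⟨m, hm⟩ := hx
  refine ⟨m, fun f hf η hη => ?_⟩
  have hfr := frequently_lt_of_liminf_lt (by isBoundedDefault) hm
  by_contra hlt
  push Not at hlt
  have hev := (hcx.tendsto hR hf).eventually_lt_const hlt
  obtain ⟨k, hk1, hk2, hk3⟩ := (hfr.and_eventually (hev.and (hN.eventually_gt_atTop 0))).exists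
  have hk1' : Av R N c (g m) k x < ε := (ENNReal.ofReal_lt_ofReal_iff hε).1 hk1
  have h1 : Av R N c (fun y => 1 - η - g m y) k x ≤ Av R N c f k x := by
    refine Av_mono hR (fun y => ?_) k x
    have := hη y
    by_cases hy : y ∈ K m <;> simp [g, hy] at this ⊢ <;> linarith
  have h2 : Av R N c (fun y => 1 - η - g m y) k x = 1 - η - Av R N c (g m) k x := by
    rw [Av_eq hR, Av_eq hR, Finset.sum_sub_distrib]
    have : (N k : ℝ) ≠ 0 := by exact_mod_cast hk3.ne'
    simp
    field_simp
  linarith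

theorem lemC2 (hR : RAct R) {μ : Measure X} [IsProbabilityMeasure μ] {u : ℝ → G}
    (huc : Continuous u) (hu : ∀ s t, u (s + t) = u s * u t)
    (huC : ∀ s, u s * c = c * u s) (H : Subgroup G) (hcH : c ∈ H)
    (hHc : ∀ h ∈ H, h * c = c * h)
    (hinv : ∀ h ∈ H, Measure.map (R h) μ = μ)
    (herg : ∀ A : Set X, MeasurableSet A → (∀ h ∈ H, R h ⁻¹' A = A) → μ A = 0 ∨ μ A = 1)
    (hsc : ∀ h ∈ H, ∃ l : ℝ, 0 < l ∧ ∀ s, u s * h = h * u (l * s))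
    {X' : Set X} (hX'm : MeasurableSet X') (hX' : μ X'ᶜ = 0)
    {K : ℕ → Set X} (hKc : ∀ m, IsCompact (K m)) (hKmono : Monotone K)
    (hKX : ∀ m, K m ⊆ X') (hKμ : Tendsto (fun m => μ (K m)ᶜ) atTop (𝓝 0))
    (hKH : ∀ h ∈ H, ∀ m, ∃ m', ∀ x ∈ K m, R h x ∈ K m')
    (hU : ∀ Z : Set X, MeasurableSet Z → μ Zᶜ = 0 → ∃ z ∈ Z, ∃ s : ℝ, s ≠ 0 ∧ R (u s) z ∈ Z)
    {V : Set G} (hVc : ∀ v ∈ V, Contr c v) {δ : ℝ} (hδ : 0 < δ)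
    (hV : ∀ Z : Set X, MeasurableSet Z → ENNReal.ofReal (1 - δ) < μ Z → ∃ z ∈ Z, ∃ v ∈ V,
      R v z ∈ Z) :
    ∃ z ∈ X', ∃ s : ℝ, s ≠ 0 ∧ ∃ v ∈ V, R (u s) z ∈ X' ∧ R v z ∈ X' ∧ R (u s) (R v z) ∈ X' := by
  obtain ⟨N, hN, hae0⟩ := exists_bigood hR (hinv c hcH)
  have hae : ∀ᵐ x ∂μ, Conv R N c x := hae0.mono fun x hx => hx.1
  obtain ⟨ε, hε, hε1, hεδ⟩ : ∃ ε : ℝ, 0 < ε ∧ ε < 1 ∧ 2 * ε < δ := by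
    refine ⟨min (1 / 2) (δ / 3), by positivity, ?_, ?_⟩
    · exact lt_of_le_of_lt (min_le_left _ _) (by norm_num)
    · linarith [min_le_right (1 / 2) (δ / 3)]
  have hKm : ∀ m, MeasurableSet (K m) := fun m => (hKc m).measurableSet
  have hgood := ae_goodK hR (hinv c hcH) hN hae hε hKm hKμ
  let C : ℕ → Set ℝ := fun m => {s | 1 / (m + 1 : ℝ) ≤ |s| ∧ |s| ≤ m + 1}
  have hC : ∀ m, IsCompact (C m) := by
    intro m
    apply Metric.isCompact_of_isClosed_isBounded
    · exact (isClosed_le continuous_const continuous_abs).inter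
        (isClosed_le continuous_abs continuous_const)
    · refine (Metric.isBounded_closedBall (x := (0 : ℝ)) (r := m + 1)).subset ?_
      rintro s ⟨-, h⟩
      simpa using h
  have hCmono : ∀ m m', m ≤ m' → C m ⊆ C m' := by
    rintro m m' h s ⟨h1, h2⟩
    have : (m : ℝ) ≤ m' := by exact_mod_cast h
    refine ⟨le_trans ?_ h1, by linarith⟩
    gcongr
  have hCex : ∀ s : ℝ, s ≠ 0 → ∃ m, s ∈ C m := by
    intro s hs
    obtain ⟨m1, h1⟩ := exists_nat_one_div_lt (abs_pos.2 hs)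
    obtain ⟨m2, h2⟩ := exists_nat_gt |s|
    refine ⟨max m1 m2, le_trans ?_ h1.le, ?_⟩
    · gcongr; exact le_max_left _ _
    · have : (m2 : ℝ) ≤ (max m1 m2 : ℕ) := by exact_mod_cast le_max_right _ _
      linarith
  have hC0 : ∀ m, ∀ s ∈ C m, s ≠ 0 := by
    rintro m s ⟨h1, -⟩ rfl
    have : (0 : ℝ) < 1 / (m + 1) := by positivity
    simp at h1
    linarith [show (0 : ℝ) ≤ m from Nat.cast_nonneg m]
  let D : ℕ → Set X := fun m => {z | Conv R N c z ∧ ∃ s ∈ C m, GoodK R N c ε (K m) (R (u s) z)}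
  have hDm : ∀ m, MeasurableSet (D m) := fun m => goodtimes_meas hR huc huC ε (K m) (hC m)
  have hDmono : Monotone D := by
    rintro m m' h z ⟨hz, s, hs, hg⟩
    exact ⟨hz, s, hCmono _ _ h hs, hg.mono (hKmono h)⟩
  have hDH1 : ∀ h ∈ H, ∀ x ∈ ⋃ m, D m, R h x ∈ ⋃ m, D m := by
    intro h hh x hx
    simp only [Set.mem_iUnion] at hx ⊢
    obtain ⟨m, hz, s, hs, hg⟩ := hx
    obtain ⟨l, hl0, hl⟩ := hsc h hh
    obtain ⟨m1, hm1⟩ := hKH h hh m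
    obtain ⟨m2, hm2⟩ := hCex (l * s) (mul_ne_zero hl0.ne' (hC0 m s hs))
    refine ⟨max m1 m2, hz.comm hR (hHc h hh), l * s, hCmono _ _ (le_max_right _ _) hm2, ?_⟩
    rw [← hR.mul, ← hl, hR.mul]
    exact (hg.shift hR (hHc h hh) hm1).mono (hKmono (le_max_left _ _))
  have hDH : ∀ h ∈ H, R h ⁻¹' (⋃ m, D m) = ⋃ m, D m := by
    intro h hh
    ext x
    refine ⟨fun hx => ?_, hDH1 h hh x⟩
    have := hDH1 h⁻¹ (H.inv_mem hh) _ hx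
    rwa [hR.inv_right] at this
  have hD1 : μ (⋃ m, D m) = 1 := by
    rcases herg _ (MeasurableSet.iUnion hDm) hDH with h0 | h1
    · exfalso
      have h0' : ∀ᵐ x ∂μ, x ∉ ⋃ m, D m := measure_eq_zero_iff_ae_notMem.1 h0
      have h3 : ∀ᵐ x ∂μ, Conv R N c x ∧ (∃ m, GoodK R N c ε (K m) x) ∧ x ∉ ⋃ m, D m := by
        filter_upwards [h0', hae, hgood] with x a1 a2 a3 using ⟨a2, a3, a1⟩
      obtain ⟨t, ht, htm, ht0⟩ := exists_measurable_superset_of_null h3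
      obtain ⟨z, hz, s, hs, hzs⟩ := hU tᶜ htm.compl (by simpa using ht0)
      have e1 : ∀ x, x ∈ tᶜ → Conv R N c x ∧ (∃ m, GoodK R N c ε (K m) x) ∧ x ∉ ⋃ m, D m := by
        intro x hx
        by_contra hcon
        exact hx (ht hcon)
      obtain ⟨a1, -, a3⟩ := e1 _ hz
      obtain ⟨-, ⟨m1, b2⟩, -⟩ := e1 _ hzs
      obtain ⟨m2, hm2⟩ := hCex s hs
      apply a3
      simp only [Set.mem_iUnion]
      exact ⟨max m1 m2, a1, s, hCmono _ _ (le_max_right _ _) hm2,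
        b2.mono (hKmono (le_max_left _ _))⟩
    · exact h1
  obtain ⟨m, hm⟩ : ∃ m, ENNReal.ofReal (1 - ε) < μ (D m) := by
    have h1 := tendsto_measure_iUnion_atTop (μ := μ) hDmono
    rw [hD1] at h1
    have h2 : ENNReal.ofReal (1 - ε) < 1 := by
      rw [ENNReal.ofReal_lt_one]; linarith
    exact (h1.eventually_const_lt h2).exists
  let T : X → Set ℝ := fun z => {s | s ∈ C m ∧ Conv R N c z ∧ GoodK R N c ε (K m) (R (u s) z)}
  have hTD : ∀ z, z ∈ D m ↔ (T z).Nonempty := by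
    intro z
    constructor
    · rintro ⟨hz, s, hs, hg⟩; exact ⟨s, hs, hz, hg⟩
    · rintro ⟨s, hs, hz, hg⟩; exact ⟨hz, s, hs, hg⟩
  let σ : X → ℝ := fun z => sSup (T z)
  have hTbdd : ∀ z, BddAbove (T z) := fun z => (hC m).bddAbove.mono fun s hs => hs.1
  have hσ : ∀ z ∈ D m, σ z ∈ T z := by
    intro z hz
    have hcp : IsCompact (T z) := by
      have : T z = C m ∩ {s | GoodK R N c ε (K m) (R (u s) z)} := by
        ext s
        exact ⟨fun h => ⟨h.1, h.2.2⟩, fun h => ⟨h.1, hz.1, h.2⟩⟩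
      rw [this]
      exact (hC m).inter_right (goodtimes_closed hR huc huC ε (K m) hz.1)
    exact hcp.sSup_mem ((hTD z).1 hz)
  have hσm : Measurable σ := by
    apply measurable_of_Ici
    intro t
    have : σ ⁻¹' Set.Ici t = {z | Conv R N c z ∧ ∃ s ∈ C m ∩ Set.Ici t,
        GoodK R N c ε (K m) (R (u s) z)} ∪ ((D m)ᶜ ∩ {z | t ≤ 0}) := by
      ext z
      by_cases hz : z ∈ D m
      · simp only [Set.mem_preimage, Set.mem_Ici, Set.mem_union, Set.mem_inter_iff,
          Set.mem_compl_iff, hz, not_true_eq_false, false_and, or_false, Set.mem_ofPred_eq]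
        constructor
        · intro h
          exact ⟨hz.1, σ z, ⟨(hσ z hz).1, h⟩, (hσ z hz).2.2⟩
        · rintro ⟨h1, s, ⟨h2, h3⟩, h4⟩
          exact le_trans h3 (le_csSup (hTbdd z) ⟨h2, h1, h4⟩)
      · have hT0 : T z = ∅ := by
          rw [← Set.not_nonempty_iff_eq_empty, ← hTD]; exact hz
        have : σ z = 0 := by simp [σ, hT0]
        simp only [Set.mem_preimage, Set.mem_Ici, Set.mem_union, Set.mem_inter_iff,
          Set.mem_compl_iff, hz, not_false_eq_true, true_and, Set.mem_ofPred_eq, this]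
        constructor
        · exact fun h => Or.inr h
        · rintro (⟨h1, s, ⟨h2, h3⟩, h4⟩ | h)
          · exact absurd ⟨h1, s, h2, h4⟩ hz
          · exact h
    rw [this]
    refine (goodtimes_meas hR huc huC ε (K m) ((hC m).inter_right isClosed_Ici)).union
      ((hDm m).compl.inter (MeasurableSet.const _))
  have hTcongr : ∀ z z', Conv R N c z → Conv R N c z' →
      (∀ f, CC f → Lam R N c f z' = Lam R N c f z) → T z' = T z := by
    intro z z' hz hz' h
    ext s
    have e : ∀ f, CC f → Lam R N c f (R (u s) z') = Lam R N c f (R (u s) z) := by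
      intro f hf
      rw [Lam_comm hR (huC s), Lam_comm hR (huC s), h _ (hf.comp hR _)]
    exact ⟨fun h => ⟨h.1, hz, h.2.2.congr fun f hf => (e f hf).symm⟩,
      fun h => ⟨h.1, hz', h.2.2.congr e⟩⟩
  let Φ : X → X := fun z => R (u (σ z)) z
  have hΦm : Measurable Φ := by
    have : Measurable fun p : X × ℝ => R (u p.2) p.1 :=
      (hR.cont.comp (by fun_prop : Continuous fun p : X × ℝ => (p.1, u p.2))).measurable
    exact this.comp (measurable_id.prodMk hσm)
  have hT : MeasurePreserving (R c) μ μ := ⟨hR.meas c, hinv c hcH⟩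
  have hconv_back : ∀ z, Conv R N c (R c z) → Conv R N c z := by
    intro z hz
    have := hz.comm hR (w := c⁻¹) (by simp)
    rwa [hR.inv_right] at this
  have hTc : ∀ z, T (R c z) = T z := by
    intro z
    by_cases hz : Conv R N c z
    · have := hz.self hR hN
      exact hTcongr z _ hz this.1 this.2
    · have h1 : T z = ∅ := by
        ext s; exact ⟨fun h => hz h.2.1, fun h => h.elim⟩
      have h2 : T (R c z) = ∅ := by
        ext s; exact ⟨fun h => hz (hconv_back z h.2.1), fun h => h.elim⟩
      rw [h1, h2]
  have hTcj : ∀ (j : ℕ) z, T (R (c ^ j) z) = T z := by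
    intro j
    induction j with
    | zero => intro z; simp [hR.one]
    | succ j ih => intro z; rw [pow_succ, hR.mul, hTc, ih]
  have hΦc : ∀ (j : ℕ) z, Φ (R (c ^ j) z) = R (c ^ j) (Φ z) := by
    intro j z
    simp only [Φ, σ, hTcj]
    rw [← hR.mul, ← hR.mul]
    congr 1
    exact ((show Commute (u _) c from huC _).pow_right j).symm.eq
  have hDc : ∀ (j : ℕ) z, R (c ^ j) z ∈ D m ↔ z ∈ D m := by
    intro j z
    rw [hTD, hTD, hTcj]
  have key : ∀ f, CC f → (∀ y, (K m).indicator (fun _ => (1 : ℝ)) y ≤ f y) →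
      (1 - ε) * μ.real (D m) ≤ ∫ z in D m, f (Φ z) ∂μ := by
    intro f hf hfK
    obtain ⟨B, hB⟩ := hf.bdd
    have hint : ∀ g : X → X, Measurable g → Integrable (fun z => f (g z)) (μ.restrict (D m)) :=
      fun g hg => Integrable.of_bound (hf.1.measurable.comp hg).aestronglyMeasurable B
        (Eventually.of_forall fun x => hB _)
    have h1 : ∀ j : ℕ, ∫ z in D m, f (R (c ^ j) (Φ z)) ∂μ = ∫ z in D m, f (Φ z) ∂μ := by
      intro j
      have hTj : MeasurePreserving (R (c ^ j)) μ μ := by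
        have := hT.iterate j
        have e : (R c)^[j] = R (c ^ j) := by ext x; exact hR.iterate c j x
        rwa [e] at this
      have hpre : R (c ^ j) ⁻¹' D m = D m := by
        ext z; exact hDc j z
      have := hTj.restrict_preimage (hDm m)
      rw [hpre] at this
      conv_rhs => rw [← this.map_eq]
      have hfm : Measurable fun z => f (Φ z) := hf.1.measurable.comp hΦm
      rw [integral_map (hR.meas _).aemeasurable hfm.aestronglyMeasurable]
      simp_rw [hΦc]
    have h2 : ∀ k, 0 < N k → ∫ z in D m, Av R N c f k (Φ z) ∂μ = ∫ z in D m, f (Φ z) ∂μ := by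
      intro k hk
      simp_rw [Av_eq hR]
      have hij : ∀ j : ℕ, Integrable (fun z => f (R (c ^ j) (Φ z))) (μ.restrict (D m)) :=
        fun j => hint _ ((hR.meas _).comp hΦm)
      rw [integral_const_mul, integral_finsetSum _ fun j _ => hij j]
      simp_rw [h1]
      have : (N k : ℝ) ≠ 0 := by exact_mod_cast hk.ne'
      simp
      field_simp
    have hconvΦ : ∀ z ∈ D m, Conv R N c (Φ z) := fun z hz => hz.1.comm hR (huC _)
    have h3 : Tendsto (fun k => ∫ z in D m, Av R N c f k (Φ z) ∂μ) atTop
        (𝓝 (∫ z in D m, Lam R N c f (Φ z) ∂μ)) := by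
      refine tendsto_integral_of_dominated_convergence (fun _ => B)
        (fun k => ((meas_comp_avg hR.meas hf.1.measurable k).comp hΦm).aestronglyMeasurable)
        (integrable_const _) (fun k => Eventually.of_forall fun x => Av_bdd hR hB k _) ?_
      filter_upwards [ae_restrict_mem (hDm m)] with z hz
      exact (hconvΦ z hz).tendsto hR hf
    have h4 : ∫ z in D m, f (Φ z) ∂μ = ∫ z in D m, Lam R N c f (Φ z) ∂μ := by
      refine tendsto_nhds_unique ?_ h3
      refine tendsto_const_nhds.congr' ?_
      filter_upwards [hN.eventually_gt_atTop 0] with k hk using (h2 k hk).symm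
    rw [h4]
    have h5 : ∫ z in D m, (1 - ε) ∂μ ≤ ∫ z in D m, Lam R N c f (Φ z) ∂μ := by
      refine setIntegral_mono_on (integrable_const _) ?_ (hDm m) ?_
      · refine Integrable.of_bound ((Lam_meas hR hf.1.measurable).comp hΦm).aestronglyMeasurable B ?_
        filter_upwards [ae_restrict_mem (hDm m)] with z hz
        exact (hconvΦ z hz).bdd hR hf hB
      · intro z hz
        have := (hσ z hz).2.2 f hf 0 (by simpa using hfK)
        simpa using this
    refine le_trans (le_of_eq ?_) h5
    simp [mul_comm]
  let Y : Set X := D m ∩ Φ ⁻¹' K m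
  have hYm : MeasurableSet Y := (hDm m).inter (hΦm (hKm m))
  have hYμ : ENNReal.ofReal (1 - δ) < μ Y := by
    let ν : Measure X := (μ.restrict (D m)).map Φ
    have : IsFiniteMeasure ν := Measure.isFiniteMeasure_map _ _
    have h1 : ENNReal.ofReal ((1 - ε) * μ.real (D m)) ≤ ν (K m) := by
      rw [(hKc m).measure_eq_biInf_integral_hasCompactSupport ν]
      refine le_iInf fun f => le_iInf fun h1 => le_iInf fun h2 => le_iInf fun h3 =>
        le_iInf fun h4 => ENNReal.ofReal_le_ofReal ?_
      rw [integral_map hΦm.aemeasurable h1.measurable.aestronglyMeasurable]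
      refine key f ⟨h1, h2⟩ fun y => ?_
      by_cases hy : y ∈ K m
      · simp [hy, h3 hy]
      · simpa [hy] using h4 y
    have h2 : ν (K m) = μ Y := by
      rw [Measure.map_apply hΦm (hKm m), Measure.restrict_apply (hΦm (hKm m)), Set.inter_comm]
    rw [← h2]
    refine lt_of_lt_of_le ?_ h1
    have h3 : 1 - ε < μ.real (D m) := by
      have := (ENNReal.ofReal_lt_iff_lt_toReal (by linarith) (measure_ne_top _ _)).1 hm
      exact this
    rw [ENNReal.ofReal_lt_ofReal_iff]
    · nlinarith
    · nlinarith
  have hYX : μ (Y ∩ X') = μ Y := by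
    apply measure_inter_conull hX'
  obtain ⟨z, ⟨hzY, hzX⟩, v, hv, hvY, hvX⟩ := hV (Y ∩ X') (hYm.inter hX'm) (by rwa [hYX])
  have hst : T (R v z) = T z := by
    have := hzY.1.1.contr hR hN (hVc v hv)
    exact hTcongr _ _ hzY.1.1 this.1 this.2
  refine ⟨z, hzX, σ z, hC0 m _ (hσ z hzY.1).1, v, hv, hKX m hzY.2, hvX, ?_⟩
  have h6 := hKX m hvY.2
  have : σ (R v z) = σ z := by simp only [σ, hst]
  simp only [Φ, this] at h6
  exact h6
end C2

open MeasureTheory ENNReal Filter Topology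

section C3
variable {G X : Type*} [Group G] [TopologicalSpace G] [IsTopologicalGroup G]
  [TopologicalSpace X] [T2Space X] [LocallyCompactSpace X] [SecondCountableTopology X]
  [MeasurableSpace X] [BorelSpace X]
  {R : G → X → X}

lemma exists_Kseq (hR : RAct R) {μ : Measure X} [IsProbabilityMeasure μ] (H : Subgroup G)
    {X' : Set X} (hX'm : MeasurableSet X') (hX' : μ X'ᶜ = 0)
    (hXH : ∀ h ∈ H, ∀ x ∈ X', R h x ∈ X') {B : ℕ → Set G} (hB : ∀ m, IsCompact (B m))
    (hBm : Monotone B) (hB1 : 1 ∈ B 0) (hBH : ∀ m, B m ⊆ H)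
    (hBh : ∀ h ∈ H, ∀ m, ∃ m', ∀ g ∈ B m, g * h ∈ B m') :
    ∃ K : ℕ → Set X, (∀ m, IsCompact (K m)) ∧ Monotone K ∧
    (∀ m, K m ⊆ X') ∧ (Tendsto (fun m => μ (K m)ᶜ) atTop (𝓝 0)) ∧
    (∀ h ∈ H, ∀ m, ∃ m', ∀ x ∈ K m, R h x ∈ K m') := by
  have h1 : ∀ i : ℕ, ∃ K, K ⊆ X' ∧ IsCompact K ∧ μ (X' \ K) < (i + 1 : ℝ≥0∞)⁻¹ := fun i =>
    hX'm.exists_isCompact_diff_lt (measure_ne_top _ _) (by simp)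
  choose K0 hK0X hK0c hK0μ using h1
  let P : ℕ → Set X := fun m => ⋃ i ∈ Finset.range (m + 1), K0 i
  have hPc : ∀ m, IsCompact (P m) := fun m => (Finset.range (m + 1)).isCompact_biUnion fun i _ => hK0c i
  have hPm : Monotone P := by
    intro m m' h
    refine Set.biUnion_subset_biUnion_left ?_
    intro i hi
    simp at hi ⊢
    omega
  let K : ℕ → Set X := fun m => (fun p : X × G => R p.2 p.1) '' (P m ×ˢ B m)
  have hKmono : Monotone K := fun m m' h => Set.image_mono (Set.prod_mono (hPm h) (hBm h))
  refine ⟨K, fun m => ((hPc m).prod (hB m)).image hR.cont, hKmono, ?_, ?_, ?_⟩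
  · rintro m _ ⟨⟨x, g⟩, ⟨hx, hg⟩, rfl⟩
    simp only [P, Set.mem_iUnion] at hx
    obtain ⟨i, -, hi⟩ := hx
    exact hXH g (hBH m hg) x (hK0X i hi)
  · have h2 : ∀ m : ℕ, μ (K m)ᶜ ≤ (m + 1 : ℝ≥0∞)⁻¹ := by
      intro m
      have hs : (K m)ᶜ ⊆ X'ᶜ ∪ (X' \ K0 m) := by
        intro x hx
        by_cases hxX : x ∈ X'
        · right
          refine ⟨hxX, fun hxK => hx ⟨(x, 1), ⟨?_, hBm (Nat.zero_le m) hB1⟩, hR.one x⟩⟩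
          simp only [P, Set.mem_iUnion]
          exact ⟨m, by simp, hxK⟩
        · left; exact hxX
      calc μ (K m)ᶜ ≤ μ (X'ᶜ ∪ (X' \ K0 m)) := measure_mono hs
        _ ≤ μ X'ᶜ + μ (X' \ K0 m) := measure_union_le _ _
        _ ≤ _ := by rw [hX', zero_add]; exact (hK0μ m).le
    refine tendsto_of_tendsto_of_tendsto_of_le_of_le tendsto_const_nhds ?_
      (fun _ => zero_le) h2
    have := ENNReal.tendsto_inv_nat_nhds_zero.comp (tendsto_add_atTop_nat 1)
    simpa [Function.comp_def] using this
  · intro h hh m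
    obtain ⟨m1, hm1⟩ := hBh h hh m
    refine ⟨max m m1, ?_⟩
    rintro _ ⟨⟨x, g⟩, ⟨hx, hg⟩, rfl⟩
    refine ⟨(x, g * h), ⟨hPm (le_max_left _ _) hx, hBm (le_max_right _ _) (hm1 g hg)⟩, ?_⟩
    exact hR.mul _ _ _

theorem lemC (hR : RAct R) {μ : Measure X} [IsProbabilityMeasure μ] {b c : G} {u v w : ℝ → G}
    (huc : Continuous u) (hu : ∀ s t, u (s + t) = u s * u t)
    (hwc : Continuous w) (hw : ∀ s t, w (s + t) = w s * w t)
    (huC : ∀ s, u s * c = c * u s) (hwb : ∀ s, w s * b = b * w s)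
    (hub : ∀ s, Contr b (u s)) (hvb : ∀ s, Contr b⁻¹ (v s)) (hvc : ∀ s, Contr c (v s))
    (huv : ∀ s t, u s * v t = v t * u s * w (s * t))
    (H : Subgroup G) (hcH : c ∈ H) (hbH : b ∈ H) (hHH : ∀ h ∈ H, ∀ g ∈ H, h * g = g * h)
    (hinv : ∀ h ∈ H, Measure.map (R h) μ = μ)
    (herg : ∀ A : Set X, MeasurableSet A → (∀ h ∈ H, R h ⁻¹' A = A) → μ A = 0 ∨ μ A = 1)
    (hscu : ∀ h ∈ H, ∃ l : ℝ, 0 < l ∧ ∀ s, u s * h = h * u (l * s))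
    (hscw : ∀ h ∈ H, ∃ l : ℝ, 0 < l ∧ ∀ s, w s * h = h * w (l * s))
    (hscw2 : ∀ l : ℝ, 0 < l → ∃ h ∈ H, ∀ s, w s * h = h * w (l * s))
    {B : ℕ → Set G} (hB : ∀ m, IsCompact (B m))
    (hBm : Monotone B) (hB1 : 1 ∈ B 0) (hBH : ∀ m, B m ⊆ H)
    (hBh : ∀ h ∈ H, ∀ m, ∃ m', ∀ g ∈ B m, g * h ∈ B m')
    (hU : ∀ Z : Set X, MeasurableSet Z → μ Zᶜ = 0 → ∃ z ∈ Z, ∃ s : ℝ, s ≠ 0 ∧ R (u s) z ∈ Z)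
    {δ : ℝ} (hδ : 0 < δ)
    (hV : ∀ Z : Set X, MeasurableSet Z → ENNReal.ofReal (1 - δ) < μ Z → ∃ z ∈ Z, ∃ s : ℝ,
      s ≠ 0 ∧ R (v s) z ∈ Z) (s : ℝ) : Measure.map (R (w s)) μ = μ := by
  rcases lemC1 hR hwc hw hwb H hbH (fun h hh => hHH h hh b hbH) hinv herg hscw hscw2 with h | h
  · exact h s
  · exfalso
    obtain ⟨X', hX'm, hX', hXH, hq⟩ := h
    obtain ⟨K, hK1, hK2, hK3, hK4, hK5⟩ := exists_Kseq hR H hX'm hX' hXH hB hBm hB1 hBH hBh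
    obtain ⟨z, hz, s, hs, v', ⟨t, ht, rfl⟩, h1, h2, h3⟩ := lemC2 hR huc hu huC H hcH
      (fun h hh => hHH h hh c hcH) hinv herg hscu hX'm hX' hK1 hK2 hK3 hK4 hK5 hU
      (V := {g | ∃ t : ℝ, t ≠ 0 ∧ v t = g}) (by rintro _ ⟨t, -, rfl⟩; exact hvc t) hδ
      (by
        intro Z hZ hZμ
        obtain ⟨z, hz, s, hs, hzs⟩ := hV Z hZ hZμ
        exact ⟨z, hz, v s, ⟨s, hs, rfl⟩, hzs⟩)
    exact mul_ne_zero hs ht (hq z hz (u s) (v t) (s * t) (hub s) (hvb t) (huv s t) h1 h2 h3)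
end C3

open MeasureTheory ENNReal Filter Topology

section Conc
variable {n : ℕ}

lemma slr_continuous_coe : Continuous (fun g : SLR n => (g : Matrix (Fin n) (Fin n) ℝ)) :=
  continuous_induced_dom

instance slr_tg : IsTopologicalGroup (SLR n) := Matrix.SpecialLinearGroup.topologicalGroup

lemma slr_ce : IsClosedEmbedding (fun g : SLR n => (g : Matrix (Fin n) (Fin n) ℝ)) := by
  refine ⟨⟨⟨rfl⟩, Subtype.val_injective⟩, ?_⟩
  have : Set.range (fun g : SLR n => (g : Matrix (Fin n) (Fin n) ℝ)) = {A | A.det = 1} := by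
    ext A
    exact ⟨fun ⟨g, hg⟩ => hg ▸ g.2, fun h => ⟨⟨A, h⟩, rfl⟩⟩
  rw [this]
  exact isClosed_eq (Continuous.matrix_det continuous_id) continuous_const

instance slr_t2 : T2Space (SLR n) := slr_ce.isEmbedding.t2Space
instance slr_sc : SecondCountableTopology (SLR n) :=
  haveI : SecondCountableTopology (Matrix (Fin n) (Fin n) ℝ) :=
    inferInstanceAs (SecondCountableTopology (Fin n → Fin n → ℝ))
  slr_ce.isEmbedding.secondCountableTopology
instance slr_lc : LocallyCompactSpace (SLR n) :=
  haveI : LocallyCompactSpace (Matrix (Fin n) (Fin n) ℝ) :=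
    inferInstanceAs (LocallyCompactSpace (Fin n → Fin n → ℝ))
  slr_ce.locallyCompactSpace

variable (Γ : Subgroup (SLR n))

/-- projection -/
def prj (g : SLR n) : XQuot Γ := Quotient.mk'' g

lemma prj_surj : Function.Surjective (prj Γ) := Quotient.mk''_surjective

lemma prj_eq {a b : SLR n} : prj Γ a = prj Γ b ↔ b * a⁻¹ ∈ Γ := by
  rw [prj, prj, Quotient.eq'', QuotientGroup.rightRel_apply]

lemma rtQ_prj (g h : SLR n) : rtQ Γ g (prj Γ h) = prj Γ (h * g) := rfl

lemma prj_oqm : IsOpenQuotientMap (prj Γ) := by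
  refine ⟨prj_surj Γ, continuous_quotient_mk', ?_⟩
  intro U hU
  have hq : IsQuotientMap (prj Γ) := isQuotientMap_quotient_mk'
  rw [← hq.isOpen_preimage]
  have : prj Γ ⁻¹' (prj Γ '' U) = ⋃ γ : Γ, (fun g => (γ : SLR n) * g) ⁻¹' U := by
    ext g
    simp only [Set.mem_preimage, Set.mem_image, Set.mem_iUnion]
    constructor
    · rintro ⟨a, ha, h⟩
      rw [prj_eq] at h
      refine ⟨⟨_, Γ.inv_mem h⟩, ?_⟩
      simpa using ha
    · rintro ⟨γ, h⟩
      refine ⟨_, h, ?_⟩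
      rw [prj_eq]
      simp
  rw [this]
  exact isOpen_iUnion fun γ => hU.preimage (continuous_const_mul _)

instance xq_sc : SecondCountableTopology (XQuot Γ) :=
  (prj_oqm Γ).isQuotientMap.secondCountableTopology (prj_oqm Γ).isOpenMap

instance xq_lc : LocallyCompactSpace (XQuot Γ) := by
  refine ⟨fun x U hU => ?_⟩
  obtain ⟨g, rfl⟩ := prj_surj Γ x
  obtain ⟨K, hK, hKU, hKc⟩ := local_compact_nhds ((prj_oqm Γ).continuous.continuousAt hU)
  exact ⟨prj Γ '' K, (prj_oqm Γ).isOpenMap.image_mem_nhds hK, by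
    rwa [Set.image_subset_iff], hKc.image (prj_oqm Γ).continuous⟩

instance xq_borel : BorelSpace (XQuot Γ) := ⟨rfl⟩

lemma xq_t2 (hΓ : DiscreteTopology Γ) : T2Space (XQuot Γ) := by
  rw [t2Space_iff_of_isOpenQuotientMap (prj_oqm Γ)]
  have hc : IsClosed (Γ : Set (SLR n)) := Subgroup.isClosed_of_discrete
  have : {q : SLR n × SLR n | prj Γ q.1 = prj Γ q.2} = (fun q : SLR n × SLR n => q.2 * q.1⁻¹) ⁻¹' Γ := by
    ext q
    exact prj_eq Γ
  rw [this]
  exact hc.preimage (by fun_prop)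

lemma rtQ_act : RAct (rtQ Γ) where
  one x := by
    obtain ⟨g, rfl⟩ := prj_surj Γ x
    rw [rtQ_prj, mul_one]
  mul g h x := by
    obtain ⟨k, rfl⟩ := prj_surj Γ x
    rw [rtQ_prj, rtQ_prj, rtQ_prj, mul_assoc]
  cont := by
    have hq := (prj_oqm Γ).prodMap (IsOpenQuotientMap.id (X := SLR n))
    rw [hq.isQuotientMap.continuous_iff]
    have : (fun p : XQuot Γ × SLR n => rtQ Γ p.2 p.1) ∘ Prod.map (prj Γ) id =
        fun p => prj Γ (p.1 * p.2) := by
      ext p; rfl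
    rw [this]
    exact (prj_oqm Γ).continuous.comp (by fun_prop)
end Conc

open MeasureTheory ENNReal Filter Topology

section Ent

lemma jensen_sum {ι : Type*} (S : Finset ι) (p : ι → ℝ) (hp : ∀ i ∈ S, 0 ≤ p i) :
    ∑ i ∈ S, Real.negMulLog (p i) ≤ (∑ i ∈ S, p i) * Real.log S.card +
      Real.negMulLog (∑ i ∈ S, p i) := by
  rcases S.eq_empty_or_nonempty with rfl | hS
  · simp
  have hc : (0 : ℝ) < S.card := by exact_mod_cast hS.card_pos
  have h := Real.concaveOn_negMulLog.le_map_sum (t := S) (w := fun _ => (S.card : ℝ)⁻¹) (p := p)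
    (fun _ _ => by positivity) (by simp [hc.ne']) (fun i hi => hp i hi)
  simp only [smul_eq_mul, ← Finset.mul_sum] at h
  set Q := ∑ i ∈ S, p i
  rw [inv_mul_le_iff₀ hc] at h
  refine h.trans (le_of_eq ?_)
  rcases eq_or_ne Q 0 with h0 | h0
  · simp [h0]
  · rw [Real.negMulLog, Real.negMulLog, Real.log_mul (by positivity) h0, Real.log_inv]
    field_simp
    ring

lemma negMulLog_le_one' {x : ℝ} (hx : 0 ≤ x) : Real.negMulLog x ≤ 1 := by
  rcases hx.eq_or_lt with rfl | h
  · simp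
  · have := Real.one_sub_inv_le_log_of_pos h
    rw [Real.negMulLog]
    have h2 : x * (1 - x⁻¹) ≤ x * Real.log x := by gcongr
    rw [mul_sub, mul_inv_cancel₀ h.ne'] at h2
    linarith

variable {X : Type*}

open Classical in
/-- weighted number of names -/
noncomputable def wnum (T : X → X) {A : Type*} [Fintype A] (L : A → Set X) (wt : A → ℝ)
    (W : Set X) (l : ℕ) : ℝ :=
  ∑ τ : Fin l → A, if ∃ y ∈ W, ∀ k : Fin l, T^[k] y ∈ L (τ k) then ∏ k, wt (τ k) else 0

variable {T : X → X} {A : Type*} [Fintype A] {L : A → Set X} {wt : A → ℝ}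

lemma wnum_succ (W : Set X) (l : ℕ) :
    wnum T L wt W (l + 1) = ∑ a, wt a * wnum T L wt (T '' (W ∩ L a)) l := by
  classical
  unfold wnum
  rw [← (Fin.consEquiv fun _ => A).sum_comp, Fintype.sum_prod_type]
  refine Finset.sum_congr rfl fun a _ => ?_
  rw [Finset.mul_sum]
  refine Finset.sum_congr rfl fun τ _ => ?_
  have : (∃ y ∈ W, ∀ k : Fin (l + 1), T^[k] y ∈ L ((Fin.consEquiv fun _ => A) (a, τ) k)) ↔
      ∃ y ∈ T '' (W ∩ L a), ∀ k : Fin l, T^[k] y ∈ L (τ k) := by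
    constructor
    · rintro ⟨y, hy, h⟩
      refine ⟨T y, ⟨y, ⟨hy, by simpa using h 0⟩, rfl⟩, fun k => ?_⟩
      have := h k.succ
      simpa using this
    · rintro ⟨_, ⟨y, ⟨hy, hya⟩, rfl⟩, h⟩
      refine ⟨y, hy, fun k => ?_⟩
      refine Fin.cases ?_ (fun k => ?_) k
      · simpa using hya
      · have := h k
        simpa using this
  rw [mul_ite, mul_zero]
  refine if_congr this ?_ rfl
  rw [Fin.prod_univ_succ]
  simp

lemma wnum_nonneg (hw : ∀ a, 0 ≤ wt a) (W : Set X) (l : ℕ) : 0 ≤ wnum T L wt W l := by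
  unfold wnum
  refine Finset.sum_nonneg fun τ _ => ?_
  split_ifs
  · exact Finset.prod_nonneg fun k _ => hw _
  · exact le_rfl

lemma wnum_union (hw : ∀ a, 0 ≤ wt a) {W : Set X} {c : ℕ} {V : Fin c → Set X}
    (h : W ⊆ ⋃ q, V q) (l : ℕ) : wnum T L wt W l ≤ ∑ q, wnum T L wt (V q) l := by
  classical
  unfold wnum
  rw [Finset.sum_comm]
  refine Finset.sum_le_sum fun τ _ => ?_
  have hp : 0 ≤ ∏ k, wt (τ k) := Finset.prod_nonneg fun k _ => hw _
  have hnn : ∀ q, 0 ≤ (if ∃ y ∈ V q, ∀ k : Fin l, T^[k] y ∈ L (τ k) then ∏ k, wt (τ k) else 0) := by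
    intro q; split_ifs
    · exact hp
    · exact le_rfl
  split_ifs with h1
  · obtain ⟨y, hy, hyk⟩ := h1
    obtain ⟨q, hq⟩ := Set.mem_iUnion.1 (h hy)
    refine le_trans (le_of_eq ?_) (Finset.single_le_sum (fun q _ => hnn q) (Finset.mem_univ q))
    rw [if_pos ⟨y, hq, hyk⟩]
  · exact Finset.sum_nonneg fun q _ => hnn q

lemma wnum_empty (l : ℕ) : wnum T L wt ∅ l = 0 := by
  simp [wnum]

lemma wnum_bound {p c : ℕ} {P : Fin p → Set X} {E : Set X} {𝒲 : Set (Set X)}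
    (h1 : ∀ W ∈ 𝒲, ∀ W' ⊆ W, W' ∈ 𝒲) (h2 : ∀ W ∈ 𝒲, T '' (W ∩ E) ∈ 𝒲)
    (h2' : ∀ W ∈ 𝒲, ∀ y ∈ W ∩ E, ∀ y' ∈ W ∩ E, ∀ i j, y ∈ P i → y' ∈ P j → i = j)
    (h3 : ∀ W ∈ 𝒲, ∃ V : Fin c → Set X, W ⊆ (⋃ q, V q) ∧ ∀ q, T '' (V q) ∈ 𝒲)
    {lam : ℝ} (hl : 0 ≤ lam) (l : ℕ) : ∀ W ∈ 𝒲,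
    wnum T (fun a : Fin p × Bool => if a.2 then P a.1 ∩ Eᶜ else P a.1 ∩ E)
      (fun a => if a.2 then lam else 1) W l ≤ (1 + lam * (p * c)) ^ l := by
  have hw : ∀ a : Fin p × Bool, (0 : ℝ) ≤ (if a.2 then lam else 1) := by
    intro a; split_ifs
    · exact hl
    · exact zero_le_one
  induction l with
  | zero =>
    intro W _
    simp only [wnum, pow_zero]
    simp only [Finset.univ_unique, Finset.sum_singleton]
    split_ifs <;> norm_num
  | succ l ih =>
    intro W hW
    rw [wnum_succ, Fintype.sum_prod_type]
    simp only [Fintype.sum_bool, if_true, Bool.false_eq_true, if_false, one_mul]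
    rw [Finset.sum_add_distrib]
    set B := (1 + lam * (p * c)) ^ l with hB
    have hB0 : 0 ≤ B := by positivity
    set Nn := wnum T (fun a : Fin p × Bool => if a.2 then P a.1 ∩ Eᶜ else P a.1 ∩ E)
      (fun a => if a.2 then lam else 1) with hNn
    have e1 : ∑ i, Nn (T '' (W ∩ (P i ∩ E))) l ≤ B := by
      by_cases hne : ∃ i, (W ∩ (P i ∩ E)).Nonempty
      · obtain ⟨i, y, hyW, hyP, hyE⟩ := hne
        rw [Finset.sum_eq_single i]
        · refine ih _ (h1 _ (h2 W hW) _ (Set.image_mono ?_))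
          rintro z ⟨a, b, c⟩; exact ⟨a, c⟩
        · intro j _ hj
          have : W ∩ (P j ∩ E) = ∅ := by
            rw [Set.eq_empty_iff_forall_notMem]
            rintro z ⟨a, b, c⟩
            exact hj (h2' W hW z ⟨a, c⟩ y ⟨hyW, hyE⟩ j i b hyP)
          rw [this, Set.image_empty]
          exact wnum_empty l
        · simp
      · push Not at hne
        have : ∀ i, Nn (T '' (W ∩ (P i ∩ E))) l = 0 := by
          intro i
          rw [hne i, Set.image_empty]
          exact wnum_empty l
        simp [this, hB0]
    have e2 : ∀ i, Nn (T '' (W ∩ (P i ∩ Eᶜ))) l ≤ c * B := by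
      intro i
      obtain ⟨V, hV, hV'⟩ := h3 W hW
      have hsub : T '' (W ∩ (P i ∩ Eᶜ)) ⊆ ⋃ q, T '' (V q) := by
        rintro _ ⟨z, hz, rfl⟩
        obtain ⟨q, hq⟩ := Set.mem_iUnion.1 (hV hz.1)
        exact Set.mem_iUnion.2 ⟨q, z, hq, rfl⟩
      calc _ ≤ ∑ q, Nn (T '' (V q)) l := wnum_union hw hsub l
        _ ≤ ∑ q : Fin c, B := Finset.sum_le_sum fun q _ => ih _ (hV' q)
        _ = c * B := by simp
    have e3 : ∑ i, lam * Nn (T '' (W ∩ (P i ∩ Eᶜ))) l ≤ lam * (p * c) * B := by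
      calc _ ≤ ∑ i : Fin p, lam * (c * B) := Finset.sum_le_sum fun i _ => by gcongr; exact e2 i
        _ = _ := by simp; ring
    rw [pow_succ]
    nlinarith

end Ent

open MeasureTheory ENNReal Filter Topology

section Ent2
variable {X : Type*} {T : X → X}

open Classical in
/-- number of bad times -/
noncomputable def badN (T : X → X) (E : Set X) (m : ℕ) (y : X) : ℕ :=
  (Finset.univ.filter fun k : Fin m => T^[k] y ∉ E).card

lemma card_good {p m : ℕ} {P : Fin p → Set X} {E K0 : Set X} {lam γ : ℝ} (hl : 0 < lam)
    (hl1 : lam ≤ 1) (S : Finset (Fin m → Fin p))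
    (hS : ∀ f ∈ S, ∃ y ∈ K0, (badN T E m y : ℝ) ≤ γ * m ∧ ∀ k : Fin m, T^[k] y ∈ P (f k)) :
    (S.card : ℝ) * lam ^ (γ * m) ≤
      wnum T (fun a : Fin p × Bool => if a.2 then P a.1 ∩ Eᶜ else P a.1 ∩ E)
        (fun a => if a.2 then lam else 1) K0 m := by
  classical
  rcases S.eq_empty_or_nonempty with rfl | ⟨f0, hf0⟩
  · simp only [Finset.card_empty, Nat.cast_zero, zero_mul]
    refine wnum_nonneg ?_ _ _
    intro a; split_ifs <;> linarith
  haveI : Nonempty X := ⟨(hS f0 hf0).choose⟩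
  choose! y hyK hyb hyP using hS
  let τ : (Fin m → Fin p) → (Fin m → Fin p × Bool) := fun f k => (f k, decide (T^[k] (y f) ∉ E))
  have hτ : Function.Injective τ := by
    intro f g h
    funext k
    exact congrArg Prod.fst (congrFun h k)
  unfold wnum
  rw [← nsmul_eq_mul, ← Finset.sum_const]
  have hnn : ∀ σ : Fin m → Fin p × Bool, (0:ℝ) ≤ ∏ k, (if (σ k).2 then lam else 1) := by
    intro σ
    refine Finset.prod_nonneg fun k _ => ?_
    split_ifs <;> linarith
  refine le_trans ?_ (Finset.sum_le_sum_of_subset_of_nonneg (Finset.subset_univ (S.image τ)) ?_)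
  · rw [Finset.sum_image hτ.injOn]
    refine Finset.sum_le_sum fun f hf => ?_
    rw [if_pos]
    · have : ∏ k, (if (τ f k).2 = true then lam else 1) = lam ^ (badN T E m (y f)) := by
        rw [badN, ← Finset.prod_const, Finset.prod_filter]
        refine Finset.prod_congr rfl fun k _ => ?_
        simp [τ]
      rw [this, ← Real.rpow_natCast]
      exact Real.rpow_le_rpow_of_exponent_ge hl hl1 (hyb f hf)
    · refine ⟨y f, hyK f hf, fun k => ?_⟩
      by_cases h : T^[k] (y f) ∈ E
      · simp [τ, h, hyP f hf k]
      · simp [τ, h, hyP f hf k]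
  · intro σ _ _
    split_ifs
    · exact hnn σ
    · exact le_rfl

variable [MeasurableSpace X] {μ : Measure X} [IsProbabilityMeasure μ]

lemma bad_meas (hT : MeasurePreserving T μ μ) {E : Set X} (hE : MeasurableSet E) {β γ : ℝ}
    (hβ : 0 ≤ β) (hγ : 0 < γ) (hEβ : μ Eᶜ ≤ ENNReal.ofReal β) {m : ℕ} (hm : 0 < m) :
    μ {y | γ * m < badN T E m y} ≤ ENNReal.ofReal (β / γ) := by
  classical
  have hb : ∀ y, ENNReal.ofReal (badN T E m y) =
      ∑ k : Fin m, (T^[k] ⁻¹' Eᶜ).indicator (fun _ => (1 : ℝ≥0∞)) y := by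
    intro y
    rw [ENNReal.ofReal_natCast, badN, Finset.card_filter]
    push_cast
    refine Finset.sum_congr rfl fun k _ => ?_
    simp [Set.indicator_apply]
  have hms : ∀ k : ℕ, MeasurableSet (T^[k] ⁻¹' Eᶜ) := fun k =>
    (hT.iterate k).measurable hE.compl
  have hint : ∫⁻ y, ENNReal.ofReal (badN T E m y) ∂μ = m * μ Eᶜ := by
    simp_rw [hb]
    rw [lintegral_finsetSum]
    · have : ∀ k : Fin m, ∫⁻ y, (T^[k] ⁻¹' Eᶜ).indicator (fun _ => (1 : ℝ≥0∞)) y ∂μ = μ Eᶜ := by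
        intro k
        rw [lintegral_indicator (hms k)]
        simp only [lintegral_const, MeasurableSet.univ, Measure.restrict_apply, Set.univ_inter, one_mul]
        exact (hT.iterate k).measure_preimage hE.compl.nullMeasurableSet
      rw [Finset.sum_congr rfl fun k _ => this k]
      simp
    · intro k _
      exact measurable_const.indicator (hms k)
  have hmeas : Measurable fun y => ENNReal.ofReal (badN T E m y) := by
    simp_rw [hb]
    exact Finset.measurable_fun_sum _ fun k _ => measurable_const.indicator (hms k)
  have h := mul_meas_ge_le_lintegral hmeas (μ := μ) (ENNReal.ofReal (γ * m))
  rw [hint] at h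
  have hm' : (0:ℝ) < m := by exact_mod_cast hm
  have h2 : ENNReal.ofReal (γ * m) * μ {y | γ * m < badN T E m y} ≤ ENNReal.ofReal (γ * m) * ENNReal.ofReal (β / γ) := by
    calc _ ≤ ENNReal.ofReal (γ * m) * μ {x | ENNReal.ofReal (γ * m) ≤ ENNReal.ofReal (badN T E m x)} := by
          gcongr
          intro hy
          exact ENNReal.ofReal_le_ofReal hy.le
      _ ≤ m * μ Eᶜ := h
      _ ≤ m * ENNReal.ofReal β := by gcongr
      _ = _ := by
        rw [← ENNReal.ofReal_natCast, ← ENNReal.ofReal_mul hm'.le, ← ENNReal.ofReal_mul (by positivity)]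
        congr 1
        field_simp
  rwa [ENNReal.mul_le_mul_iff_right (by simp; positivity) (by simp)] at h2

lemma cells_disj {p : ℕ} {P : Fin p → Set X} (hPd : Pairwise (Function.onFun Disjoint P)) (m : ℕ) :
    Pairwise (Function.onFun Disjoint (refinedPartition T P m)) := by
  intro f g hfg
  obtain ⟨k, hk⟩ := Function.ne_iff.1 hfg
  rw [Function.onFun, Set.disjoint_left]
  intro y hf hg
  exact Set.disjoint_left.1 (hPd hk) (Set.mem_iInter.1 hf k) (Set.mem_iInter.1 hg k)

lemma ent_bound (hT : MeasurePreserving T μ μ) {p c : ℕ} (hp : 0 < p) {P : Fin p → Set X}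
    (hPm : ∀ i, MeasurableSet (P i)) (hPd : Pairwise (Function.onFun Disjoint P))
    {β γ lam : ℝ} (hβ : 0 < β) (hγ : 0 < γ) (hl : 0 < lam) (hl1 : lam ≤ 1)
    {E K0 : Set X} (hE : MeasurableSet E) (hEβ : μ Eᶜ ≤ ENNReal.ofReal β)
    (hK0β : μ K0ᶜ ≤ ENNReal.ofReal β) {𝒲 : Set (Set X)} {C0 : ℕ} (hC0 : 0 < C0) {V0 : Fin C0 → Set X}
    (hV0 : K0 ⊆ ⋃ q, V0 q) (hV0W : ∀ q, V0 q ∈ 𝒲)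
    (h1 : ∀ W ∈ 𝒲, ∀ W' ⊆ W, W' ∈ 𝒲) (h2 : ∀ W ∈ 𝒲, T '' (W ∩ E) ∈ 𝒲)
    (h2' : ∀ W ∈ 𝒲, ∀ y ∈ W ∩ E, ∀ y' ∈ W ∩ E, ∀ i j, y ∈ P i → y' ∈ P j → i = j)
    (h3 : ∀ W ∈ 𝒲, ∃ V : Fin c → Set X, W ⊆ (⋃ q, V q) ∧ ∀ q, T '' (V q) ∈ 𝒲)
    {m : ℕ} (hm : 0 < m) :
    ∑ f, Real.negMulLog (μ (refinedPartition T P m f)).toReal ≤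
      Real.log C0 + 2 + m * (γ * (- Real.log lam) + lam * (p * c) + (β + β / γ) * Real.log p) := by
  classical
  have hm' : (0:ℝ) < m := by exact_mod_cast hm
  have hcm : ∀ f, MeasurableSet (refinedPartition T P m f) := fun f =>
    MeasurableSet.iInter fun k => (hT.iterate k).measurable (hPm _)
  have hcd := cells_disj (T := T) hPd m
  set q : (Fin m → Fin p) → ℝ := fun f => (μ (refinedPartition T P m f)).toReal with hq
  have hsum : ∀ S : Finset (Fin m → Fin p), ∑ f ∈ S, q f =
      (μ (⋃ f ∈ S, refinedPartition T P m f)).toReal := by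
    intro S
    rw [measure_biUnion_finset (fun f _ g _ h => hcd h) (fun f _ => hcm f),
      ENNReal.toReal_sum (fun f _ => measure_ne_top _ _)]
  have hq0 : ∀ f, 0 ≤ q f := fun f => ENNReal.toReal_nonneg
  set 𝒢 : Finset (Fin m → Fin p) := Finset.univ.filter fun f =>
    ∃ y ∈ K0, (badN T E m y : ℝ) ≤ γ * m ∧ ∀ k : Fin m, T^[k] y ∈ P (f k) with h𝒢
  have hlogl : 0 ≤ - Real.log lam := by have := Real.log_nonpos hl.le hl1; linarith
  have hlogC : 0 ≤ Real.log C0 := Real.log_natCast_nonneg C0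
  have hlogp : 0 ≤ Real.log p := Real.log_natCast_nonneg p
  -- good
  have hcard : (𝒢.card : ℝ) * lam ^ (γ * m) ≤ C0 * (1 + lam * (p * c)) ^ m := by
    refine (card_good hl hl1 𝒢 (fun f hf => (Finset.mem_filter.1 hf).2)).trans ?_
    refine (wnum_union ?_ hV0 m).trans ?_
    · intro a; split_ifs <;> linarith
    · refine (Finset.sum_le_sum fun q _ => wnum_bound h1 h2 h2' h3 hl.le m _ (hV0W q)).trans ?_
      simp
  have hlog : Real.log 𝒢.card ≤ Real.log C0 + m * (γ * (- Real.log lam) + lam * (p * c)) := by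
    rcases Nat.eq_zero_or_pos 𝒢.card with h0 | h0
    · rw [h0]; simp only [Nat.cast_zero, Real.log_zero]; positivity
    · have h0' : (0:ℝ) < 𝒢.card := by exact_mod_cast h0
      have hC0' : (0:ℝ) < C0 := by exact_mod_cast hC0
      have hpos : 0 < 1 + lam * (p * c) := by positivity
      have h := Real.log_le_log (by positivity) hcard
      rw [Real.log_mul h0'.ne' (by positivity), Real.log_rpow hl, Real.log_mul hC0'.ne' (by positivity),
        Real.log_pow] at h
      have h5 := Real.log_le_sub_one_of_pos hpos
      have h6 : (m:ℝ) * Real.log (1 + lam * (p * c)) ≤ m * (lam * (p * c)) := by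
        gcongr; linarith
      nlinarith
  have hle1 : ∀ S : Finset (Fin m → Fin p), ∑ f ∈ S, q f ≤ 1 := by
    intro S; rw [hsum]; exact ENNReal.toReal_le_of_le_ofReal zero_le_one (by simpa using prob_le_one)
  have hA : ∑ f ∈ 𝒢, Real.negMulLog (q f) ≤
      Real.log C0 + m * (γ * (- Real.log lam) + lam * (p * c)) + 1 := by
    refine (jensen_sum 𝒢 q (fun f _ => hq0 f)).trans ?_
    have := negMulLog_le_one' (x := ∑ f ∈ 𝒢, q f) (Finset.sum_nonneg fun f _ => hq0 f)
    have h7 : (∑ f ∈ 𝒢, q f) * Real.log 𝒢.card ≤ 1 * Real.log 𝒢.card :=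
      mul_le_mul_of_nonneg_right (hle1 _) (Real.log_natCast_nonneg _)
    linarith
  have hQ' : ∑ f ∈ 𝒢ᶜ, q f ≤ β + β / γ := by
    rw [hsum]
    refine ENNReal.toReal_le_of_le_ofReal (by positivity) ?_
    rw [ENNReal.ofReal_add (by positivity) (by positivity)]
    refine le_trans (measure_mono (t := K0ᶜ ∪ {y | γ * m < badN T E m y}) ?_)
      ((measure_union_le _ _).trans (add_le_add hK0β (bad_meas hT hE hβ.le hγ hEβ hm)))
    intro y hy
    simp only [Set.mem_iUnion, exists_prop] at hy
    obtain ⟨f, hf, hyf⟩ := hy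
    by_contra hcon
    simp only [Set.mem_union, Set.mem_compl_iff, Set.mem_ofPred_eq, not_or, not_not, not_lt] at hcon
    refine (Finset.mem_compl.1 hf) (Finset.mem_filter.2 ⟨Finset.mem_univ _, y, hcon.1, hcon.2, fun k => ?_⟩)
    exact Set.mem_iInter.1 hyf k
  have hcard2 : Real.log (𝒢ᶜ.card) ≤ m * Real.log p := by
    rw [← Real.log_pow]
    rcases Nat.eq_zero_or_pos 𝒢ᶜ.card with h0 | h0
    · rw [h0]; simp only [Nat.cast_zero, Real.log_zero]; rw [Real.log_pow]; positivity
    · refine Real.log_le_log (by exact_mod_cast h0) ?_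
      have := Finset.card_le_univ 𝒢ᶜ
      simp only [Fintype.card_pi, Fintype.card_fin, Finset.prod_const, Finset.card_univ] at this
      exact_mod_cast this
  have hB : ∑ f ∈ 𝒢ᶜ, Real.negMulLog (q f) ≤ (β + β / γ) * (m * Real.log p) + 1 := by
    refine (jensen_sum 𝒢ᶜ q (fun f _ => hq0 f)).trans ?_
    have := negMulLog_le_one' (x := ∑ f ∈ 𝒢ᶜ, q f) (Finset.sum_nonneg fun f _ => hq0 f)
    have h7 : (∑ f ∈ 𝒢ᶜ, q f) * Real.log 𝒢ᶜ.card ≤ (β + β / γ) * (m * Real.log p) :=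
      mul_le_mul hQ' hcard2 (Real.log_natCast_nonneg _) (by positivity)
    linarith
  rw [← Finset.sum_add_sum_compl 𝒢]
  linarith

theorem ent_zero (hT : MeasurePreserving T μ μ) {p c : ℕ} {P : Fin p → Set X}
    (hP : IsFinMeasPartition μ P)
    (hyp : ∀ β : ℝ, 0 < β → ∃ (E K0 : Set X) (𝒲 : Set (Set X)) (C0 : ℕ) (V0 : Fin C0 → Set X),
      MeasurableSet E ∧ μ Eᶜ ≤ ENNReal.ofReal β ∧ μ K0ᶜ ≤ ENNReal.ofReal β ∧ 
      K0 ⊆ (⋃ q, V0 q) ∧ (∀ q, V0 q ∈ 𝒲) ∧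
      (∀ W ∈ 𝒲, ∀ W' ⊆ W, W' ∈ 𝒲) ∧ (∀ W ∈ 𝒲, T '' (W ∩ E) ∈ 𝒲) ∧
      (∀ W ∈ 𝒲, ∀ y ∈ W ∩ E, ∀ y' ∈ W ∩ E, ∀ i j, y ∈ P i → y' ∈ P j → i = j) ∧
      (∀ W ∈ 𝒲, ∃ V : Fin c → Set X, W ⊆ (⋃ q, V q) ∧ ∀ q, T '' (V q) ∈ 𝒲)) :
    ⨅ m : ℕ, finPartitionEntropy μ (refinedPartition T P (m + 1)) / (m + 1 : ℝ≥0∞) = 0 := by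
  have hp : 0 < p := by
    rcases Nat.eq_zero_or_pos p with rfl | h
    · exfalso
      have := hP.2.2
      simp at this
    · exact h
  refine le_antisymm (ENNReal.le_of_forall_pos_le_add fun ε hε _ => ?_) zero_le
  rw [zero_add]
  have hε' : (0:ℝ) < ε := hε
  have hlogp : 0 ≤ Real.log p := Real.log_natCast_nonneg p
  obtain ⟨lam, hl, hl1, hl2⟩ : ∃ lam : ℝ, 0 < lam ∧ lam ≤ 1 ∧ lam * (p * c) ≤ ε / 4 := by
    refine ⟨min 1 (ε / 4 / (p * c + 1)), by positivity, min_le_left _ _, ?_⟩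
    calc _ ≤ (ε / 4 / (p * c + 1)) * (p * c + 1 : ℝ) := by
          gcongr
          · exact min_le_right _ _
          · linarith
      _ = ε / 4 := by field_simp
  have hlogl : 0 ≤ - Real.log lam := by have := Real.log_nonpos hl.le hl1; linarith
  obtain ⟨γ, hγ, hγ2⟩ : ∃ γ : ℝ, 0 < γ ∧ γ * (- Real.log lam) ≤ ε / 4 := by
    refine ⟨ε / 4 / (- Real.log lam + 1), by positivity, ?_⟩
    calc _ ≤ (ε / 4 / (- Real.log lam + 1)) * (- Real.log lam + 1) := by gcongr; linarith
      _ = ε / 4 := by field_simp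
  obtain ⟨β, hβ, hβ2⟩ : ∃ β : ℝ, 0 < β ∧ (β + β / γ) * Real.log p ≤ ε / 4 := by
    refine ⟨ε / 4 / ((1 + 1 / γ) * Real.log p + 1), by positivity, ?_⟩
    calc _ = (ε / 4 / ((1 + 1 / γ) * Real.log p + 1)) * ((1 + 1 / γ) * Real.log p) := by ring
      _ ≤ (ε / 4 / ((1 + 1 / γ) * Real.log p + 1)) * ((1 + 1 / γ) * Real.log p + 1) := by gcongr; linarith
      _ = ε / 4 := by field_simp
  obtain ⟨E, K0, 𝒲, C0, V0, hE, hEβ, hK0β, hV0, hV0W, h1, h2, h2', h3⟩ := hyp (min β (1/2)) (by positivity)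
  have hC0 : 0 < C0 := by
    rcases Nat.eq_zero_or_pos C0 with rfl | h
    · exfalso
      have : K0 = ∅ := by simpa using hV0
      rw [this] at hK0β
      simp only [Set.compl_empty, measure_univ] at hK0β
      have h8 : (1 : ℝ≥0∞) ≤ ENNReal.ofReal (1/2) := hK0β.trans (ENNReal.ofReal_le_ofReal (min_le_right _ _))
      rw [ENNReal.one_le_ofReal] at h8
      norm_num at h8
    · exact h
  have hle : ENNReal.ofReal (min β (1/2)) ≤ ENNReal.ofReal β := ENNReal.ofReal_le_ofReal (min_le_left _ _)
  obtain ⟨m, hm⟩ := exists_nat_ge ((Real.log C0 + 2) / (ε / 4))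
  refine (iInf_le _ m).trans ?_
  rw [div_le_iff₀ (by positivity)] at hm
  have hb := ent_bound hT hp hP.1 hP.2.1 hβ hγ hl hl1 hE (hEβ.trans hle) (hK0β.trans hle) hC0 hV0 hV0W
    h1 h2 h2' h3 (Nat.succ_pos m)
  refine ENNReal.div_le_of_le_mul ?_
  rw [finPartitionEntropy]
  have : (ε : ℝ≥0∞) * (m + 1) = ENNReal.ofReal (ε * (m + 1)) := by
    rw [ENNReal.ofReal_mul hε'.le, ENNReal.ofReal_coe_nnreal, ENNReal.ofReal_add (by positivity) (by positivity)]
    simp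
  rw [this]
  refine ENNReal.ofReal_le_ofReal (hb.trans ?_)
  push_cast
  have hm0 : (0:ℝ) ≤ m := by positivity
  have : ((m:ℝ) + 1) * (γ * (- Real.log lam) + lam * (p * c) + (β + β / γ) * Real.log p) ≤ (m + 1) * (3 * (ε / 4)) := by
    gcongr; linarith
  nlinarith

end Ent2

open MeasureTheory ENNReal Filter Topology

section Geo
variable {n : ℕ}

/-- deviation from the identity -/
def dv (g : SLR n) (a b : Fin n) : ℝ := (g : Matrix (Fin n) (Fin n) ℝ) a b - (1 : Matrix (Fin n) (Fin n) ℝ) a b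

/-- normalised diagonal element -/
noncomputable def dgE (α : Fin n → ℝ) : SLR n :=
  ⟨Matrix.diagonal fun i => Real.exp (α i - (∑ k, α k) / n), by
    rw [Matrix.det_diagonal, ← Real.exp_sum, Finset.sum_sub_distrib]
    rcases Nat.eq_zero_or_pos n with rfl | h
    · simp
    · have : (n : ℝ) ≠ 0 := by positivity
      simp only [Finset.sum_const, Finset.card_univ, Fintype.card_fin, nsmul_eq_mul]
      rw [mul_div_cancel₀ _ this, sub_self, Real.exp_zero]⟩

lemma dgE_coe (α : Fin n → ℝ) : (dgE α : Matrix (Fin n) (Fin n) ℝ) =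
    Matrix.diagonal fun i => Real.exp (α i - (∑ k, α k) / n) := rfl

lemma dgE_add (α β : Fin n → ℝ) : dgE (α + β) = dgE α * dgE β := by
  apply Subtype.ext
  rw [Matrix.SpecialLinearGroup.coe_mul, dgE_coe, dgE_coe, dgE_coe, Matrix.diagonal_mul_diagonal]
  congr 1
  funext i
  rw [← Real.exp_add]
  congr 1
  simp only [Pi.add_apply, Finset.sum_add_distrib]
  ring

lemma dgE_zero : dgE (0 : Fin n → ℝ) = 1 := by
  apply Subtype.ext
  rw [dgE_coe]
  simp

lemma dgE_inv (α : Fin n → ℝ) : (dgE α)⁻¹ = dgE (-α) := by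
  rw [inv_eq_iff_mul_eq_one, ← dgE_add, add_neg_cancel, dgE_zero]

lemma dgE_pos (α : Fin n → ℝ) : IsPosDiag (dgE α) := by
  refine ⟨fun i j h => ?_, fun i => ?_⟩
  · rw [dgE_coe, Matrix.diagonal_apply_ne _ h]
  · rw [dgE_coe, Matrix.diagonal_apply_eq]; positivity

lemma slr_cont_iff {Y : Type*} [TopologicalSpace Y] {f : Y → SLR n} :
    Continuous f ↔ ∀ i j, Continuous fun y => (f y : Matrix (Fin n) (Fin n) ℝ) i j := by
  rw [slr_ce.isEmbedding.continuous_iff]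
  exact ⟨fun h i j => h.matrix_elem i j, fun h => continuous_matrix h⟩

lemma dgE_cont : Continuous (dgE : (Fin n → ℝ) → SLR n) := by
  rw [slr_cont_iff]
  intro i j
  simp only [dgE_coe, Matrix.diagonal_apply]
  split_ifs
  · fun_prop
  · fun_prop

lemma dgE_surj {g : SLR n} (hg : IsPosDiag g) : dgE (fun i => Real.log ((g : Matrix (Fin n) (Fin n) ℝ) i i)) = g := by
  have hgd : (g : Matrix (Fin n) (Fin n) ℝ) = Matrix.diagonal fun i => (g : Matrix (Fin n) (Fin n) ℝ) i i := by
    ext i j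
    rcases eq_or_ne i j with rfl | h
    · simp
    · rw [hg.1 i j h, Matrix.diagonal_apply_ne _ h]
  have hdet := g.2
  rw [hgd, Matrix.det_diagonal] at hdet
  have hs : ∑ i, Real.log ((g : Matrix (Fin n) (Fin n) ℝ) i i) = 0 := by
    rw [← Real.log_prod (fun i _ => (hg.2 i).ne'), hdet, Real.log_one]
  apply Subtype.ext
  rw [dgE_coe, hs]
  conv_rhs => rw [hgd]
  congr 1
  funext i
  simp [Real.exp_log (hg.2 i)]

lemma conj_dgE (α : Fin n → ℝ) (g : SLR n) (a b : Fin n) :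
    (((dgE α)⁻¹ * g * dgE α : SLR n) : Matrix (Fin n) (Fin n) ℝ) a b =
      Real.exp (α b - α a) * (g : Matrix (Fin n) (Fin n) ℝ) a b := by
  rw [dgE_inv, Matrix.SpecialLinearGroup.coe_mul, Matrix.SpecialLinearGroup.coe_mul, dgE_coe, dgE_coe,
    Matrix.mul_diagonal, Matrix.diagonal_mul, mul_right_comm, ← Real.exp_add]
  congr 2
  simp only [Pi.neg_apply, Finset.sum_neg_distrib]
  ring

lemma dv_conj (α : Fin n → ℝ) (g : SLR n) (a b : Fin n) :
    dv ((dgE α)⁻¹ * g * dgE α) a b = Real.exp (α b - α a) * dv g a b := by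
  rw [dv, conj_dgE, dv, mul_sub]
  congr 1
  rcases eq_or_ne a b with rfl | h
  · simp
  · simp [Matrix.one_apply_ne h]

lemma slr_nhds {g0 : SLR n} {U : Set (SLR n)} (hU : U ∈ 𝓝 g0) : ∃ r > 0, ∀ g : SLR n,
    (∀ a b, |(g : Matrix (Fin n) (Fin n) ℝ) a b - (g0 : Matrix (Fin n) (Fin n) ℝ) a b| ≤ r) → g ∈ U := by
  rw [slr_ce.isEmbedding.nhds_eq_comap, mem_comap] at hU
  obtain ⟨V, hV, hVU⟩ := hU
  let f : Fin n → Fin n → ℝ := fun a b => (g0 : Matrix (Fin n) (Fin n) ℝ) a b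
  have hV' : (V : Set (Fin n → Fin n → ℝ)) ∈ 𝓝 f := hV
  obtain ⟨r, hr, hrV⟩ := Metric.nhds_basis_closedBall.mem_iff.1 hV'
  refine ⟨r, hr, fun g hg => hVU (hrV (?_ : (fun a b => (g : Matrix (Fin n) (Fin n) ℝ) a b) ∈ Metric.closedBall f r))⟩
  rw [Metric.mem_closedBall, dist_pi_le_iff hr.le]
  intro a
  rw [dist_pi_le_iff hr.le]
  intro b
  rw [Real.dist_eq]
  exact hg a b

lemma nhds_dv {r : ℝ} (hr : 0 < r) : ∀ᶠ g : SLR n in 𝓝 1, ∀ a b, |dv g a b| ≤ r := by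
  rw [eventually_all]; intro a
  rw [eventually_all]; intro b
  have hc : Continuous fun g : SLR n => |dv g a b| := by
    unfold dv
    exact ((slr_continuous_coe.matrix_elem a b).sub continuous_const).abs
  have := hc.tendsto 1
  have h0 : |dv (1 : SLR n) a b| = 0 := by simp [dv]
  rw [h0] at this
  exact this.eventually (eventually_le_nhds hr)

/-- elementary one-parameter group -/
noncomputable def tvs (i j : Fin n) (s : ℝ) : SLR n :=
  if h : i ≠ j then Matrix.SpecialLinearGroup.transvection h s else 1

lemma tvs_coe {i j : Fin n} (h : i ≠ j) (s : ℝ) : (tvs i j s : Matrix (Fin n) (Fin n) ℝ) = 1 + Matrix.single i j s := by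
  rw [tvs, dif_pos h, Matrix.SpecialLinearGroup.transvection_coe]

lemma dv_tvs {i j : Fin n} (h : i ≠ j) (s : ℝ) (a b : Fin n) : dv (tvs i j s) a b = if i = a ∧ j = b then s else 0 := by
  rw [dv, tvs_coe h, Matrix.add_apply, add_sub_cancel_left, Matrix.single_apply]

lemma tvs_cont (i j : Fin n) : Continuous (tvs i j) := by
  by_cases h : i = j
  · have : tvs i j = fun _ => 1 := by funext s; simp [tvs, h]
    rw [this]; exact continuous_const
  · rw [slr_cont_iff]
    intro a b
    simp only [tvs_coe h, Matrix.add_apply, Matrix.single_apply]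
    split_ifs <;> fun_prop

variable (Γ : Subgroup (SLR n))

/-- triviality of `U` at `μ` -/
def TrivU (μ : Measure (XQuot Γ)) (u : ℝ → SLR n) : Prop :=
  ∀ δ : ℝ, 0 < δ → ∃ K : Set (XQuot Γ), IsCompact K ∧ μ Kᶜ ≤ ENNReal.ofReal δ ∧
    ∀ x ∈ K, ∀ s : ℝ, s ≠ 0 → rtQ Γ (u s) x ∉ K

variable {Γ}

lemma label_radius [T2Space (XQuot Γ)] {p : ℕ} {Q : Fin p → Set (XQuot Γ)} (hQ : ∀ i, IsCompact (Q i))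
    (hd : Pairwise (Function.onFun Disjoint Q)) : ∃ r > 0, ∀ g : SLR n, (∀ a b, |dv g a b| ≤ r) →
      ∀ i j, ∀ x ∈ Q i, rtQ Γ g x ∈ Q j → i = j := by
  have : ∀ᶠ g : SLR n in 𝓝 1, ∀ i j, ∀ x ∈ Q i, rtQ Γ g x ∈ Q j → i = j := by
    rw [eventually_all]; intro i
    rw [eventually_all]; intro j
    by_cases hij : i = j
    · exact Eventually.of_forall fun _ _ _ _ => hij
    refine (hQ i).eventually_forall_of_forall_eventually fun x hx => ?_
    have hc : Continuous fun z : SLR n × XQuot Γ => rtQ Γ z.1 z.2 := 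
      (rtQ_act Γ).cont.comp continuous_swap
    have hmem : (fun z : SLR n × XQuot Γ => rtQ Γ z.1 z.2) (1, x) ∈ (Q j)ᶜ := by
      simp only [(rtQ_act Γ).one]
      exact Set.disjoint_left.1 (hd hij) hx
    filter_upwards [hc.continuousAt ((hQ j).isClosed.isOpen_compl.mem_nhds hmem)] with z hz hz'
    exact absurd hz' hz
  obtain ⟨r, hr, h⟩ := slr_nhds this
  exact ⟨r, hr, fun g hg => h g hg⟩

lemma tube [T2Space (XQuot Γ)] {K : Set (XQuot Γ)} (hK : IsCompact K) {u : ℝ → SLR n} (hu : Continuous u)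
    (hKu : ∀ x ∈ K, ∀ s : ℝ, s ≠ 0 → rtQ Γ (u s) x ∉ K) {r : ℝ} (hr : 0 < r) :
    ∃ ρ > 0, ∀ x ∈ K, ∀ s : ℝ, r / 2 ≤ |s| → |s| ≤ r → ∀ g : SLR n,
      (∀ a b, |dv g a b - dv (u s) a b| ≤ ρ) → rtQ Γ g x ∉ K := by
  have hSc : IsCompact {s : ℝ | r / 2 ≤ |s| ∧ |s| ≤ r} := by
    refine Metric.isCompact_of_isClosed_isBounded ?_ ?_
    · exact (isClosed_le continuous_const continuous_abs).inter (isClosed_le continuous_abs continuous_const)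
    · refine (Metric.isBounded_Icc (-r) r).subset ?_
      intro s hs
      exact abs_le.1 hs.2
  have : ∀ᶠ A : Fin n → Fin n → ℝ in 𝓝 0, ∀ z ∈ K ×ˢ {s : ℝ | r / 2 ≤ |s| ∧ |s| ≤ r}, ∀ g : SLR n,
      (∀ a b, (g : Matrix (Fin n) (Fin n) ℝ) a b = (u z.2 : Matrix (Fin n) (Fin n) ℝ) a b + A a b) → rtQ Γ g z.1 ∉ K := by
    refine (hK.prod hSc).eventually_forall_of_forall_eventually ?_
    rintro ⟨x, s⟩ ⟨hx, hs1, hs2⟩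
    have hs0 : s ≠ 0 := by
      rintro rfl
      simp at hs1
      linarith
    have h1 : ∀ᶠ q : XQuot Γ × SLR n in 𝓝 (x, u s), rtQ Γ q.2 q.1 ∉ K :=
      (rtQ_act Γ).cont.continuousAt (x := (x, u s))
        (hK.isClosed.isOpen_compl.mem_nhds (show (rtQ Γ (u s) x) ∈ Kᶜ from hKu x hx s hs0))
    rw [nhds_prod_eq, eventually_prod_iff] at h1
    obtain ⟨pa, hpa, pb, hpb, h1⟩ := h1
    rw [slr_ce.isEmbedding.nhds_eq_comap, eventually_comap] at hpb
    have hc : Continuous fun z : (Fin n → Fin n → ℝ) × (XQuot Γ × ℝ) =>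
        (u z.2.2 : Matrix (Fin n) (Fin n) ℝ) + Matrix.of z.1 := by
      refine continuous_matrix fun a b => ?_
      simp only [Matrix.add_apply, Matrix.of_apply]
      have := (slr_continuous_coe.comp hu).matrix_elem a b
      exact (this.comp (continuous_snd.comp continuous_snd)).add (by fun_prop)
    have h2 := hc.tendsto (0, (x, s))
    have h0 : (u (0, (x, s)).2.2 : Matrix (Fin n) (Fin n) ℝ) + Matrix.of (0 : Fin n → Fin n → ℝ) = u s := by
      ext a b; simp
    simp only at h2
    rw [h0] at h2
    have h3 : Tendsto (fun z : (Fin n → Fin n → ℝ) × (XQuot Γ × ℝ) => z.2.1) (𝓝 (0, (x, s))) (𝓝 x) :=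
      (continuous_fst.comp continuous_snd).tendsto _
    filter_upwards [h2.eventually hpb, h3.eventually hpa] with z hz1 hz2 g hg
    refine h1 hz2 (hz1 g ?_)
    ext a b
    simpa using hg a b
  obtain ⟨ρ, hρ, h⟩ := Metric.nhds_basis_closedBall.eventually_iff.1 this
  refine ⟨ρ, hρ, fun x hx s hs1 hs2 g hg => ?_⟩
  refine h (x := fun a b => dv g a b - dv (u s) a b) ?_ (x, s) ⟨hx, hs1, hs2⟩ g ?_
  · rw [Metric.mem_closedBall, dist_pi_le_iff hρ.le]
    intro a
    rw [dist_pi_le_iff hρ.le]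
    intro b
    rw [Real.dist_eq]
    simpa using hg a b
  · intro a b
    simp only [dv]
    ring

/-- closeness -/
def Cl (I : Finset (Fin n)) (r η : ℝ) (g : SLR n) : Prop :=
  ∀ a b, |dv g a b| ≤ if a ∈ I ∧ b ∉ I then r else η

lemma no_pair [T2Space (XQuot Γ)] {μ : Measure (XQuot Γ)} (hinv : ∀ g, IsPosDiag g → Measure.map (rtQ Γ g) μ = μ)
    {I : Finset (Fin n)} {i j : Fin n} (hi : i ∈ I) (hj : j ∉ I) (htr : TrivU Γ μ (tvs i j))
    {r δ : ℝ} (hr : 0 < r) (hδ : 0 < δ) :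
    ∃ K : Set (XQuot Γ), MeasurableSet K ∧ μ Kᶜ ≤ ENNReal.ofReal δ ∧ ∃ η0 > 0, ∀ η ≤ η0,
      ∀ x ∈ K, ∀ g, Cl I r η g → r / 2 ≤ |dv g i j| → rtQ Γ g x ∉ K := by
  obtain ⟨K, hK, hKδ, hKu⟩ := htr δ hδ
  have hij : i ≠ j := by rintro rfl; exact hj hi
  obtain ⟨ρ, hρ, hρK⟩ := tube hK (tvs_cont i j) hKu hr
  obtain ⟨l, hl0, hl⟩ : ∃ l : ℝ, 0 ≤ l ∧ Real.exp (-l) * r ≤ ρ := by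
    refine ⟨max 0 (-Real.log (ρ / r)), le_max_left _ _, ?_⟩
    have : Real.exp (-max 0 (-Real.log (ρ / r))) ≤ ρ / r := by
      rw [← Real.le_log_iff_exp_le (by positivity)]
      have := le_max_right 0 (-Real.log (ρ / r))
      linarith
    calc _ ≤ ρ / r * r := by gcongr
      _ = ρ := by field_simp
  let α : Fin n → ℝ := fun a => if a ∈ I then (if a = i then 0 else l) else (if a = j then 0 else -l)
  set b := dgE α with hb
  refine ⟨rtQ Γ b ⁻¹' K, (rtQ_act Γ).meas b hK.measurableSet, ?_, Real.exp (-(2 * l)) * ρ, by positivity, ?_⟩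
  · rw [← Set.preimage_compl, ← Measure.map_apply ((rtQ_act Γ).meas b) hK.measurableSet.compl, hinv b (dgE_pos α)]
    exact hKδ
  · intro η hη x hx g hg hs1 hx2
    rw [Set.mem_preimage] at hx hx2
    have e : rtQ Γ b (rtQ Γ g x) = rtQ Γ (b⁻¹ * g * b) (rtQ Γ b x) := by
      rw [← (rtQ_act Γ).mul, ← (rtQ_act Γ).mul]
      congr 1
      group
    rw [e] at hx2
    have hs2 : |dv g i j| ≤ r := by simpa [hi, hj] using hg i j
    refine hρK _ hx (dv g i j) hs1 hs2 _ (fun a c => ?_) hx2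
    rw [hb, dv_conj, dv_tvs hij]
    have hgac := hg a c
    by_cases h1 : i = a ∧ j = c
    · obtain ⟨rfl, rfl⟩ := h1
      simp [α, hi, hj, hρ.le]
    rw [if_neg h1, sub_zero, abs_mul, abs_of_pos (Real.exp_pos _)]
    by_cases h2 : a ∈ I ∧ c ∉ I
    · rw [if_pos h2] at hgac
      refine le_trans ?_ hl
      have : α c - α a ≤ -l := by
        simp only [α, h2.1, h2.2, if_true, if_false]
        split_ifs with h3 h4
        · exact absurd ⟨h4.symm, h3.symm⟩ h1
        · linarith
        · linarith
        · linarith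
      gcongr
    · rw [if_neg h2] at hgac
      have : α c - α a ≤ 2 * l := by
        simp only [α]
        split_ifs <;> linarith
      calc _ ≤ Real.exp (2 * l) * (Real.exp (-(2 * l)) * ρ) := by
            gcongr
            exact hgac.trans hη
        _ = ρ := by rw [← mul_assoc, ← Real.exp_add]; simp

end Geo

open MeasureTheory ENNReal Filter Topology

section Geo2
variable {n : ℕ} {Γ : Subgroup (SLR n)}

/-- cell number -/
noncomputable def cellN (r x : ℝ) : Fin 9 := Fin.ofNat 9 ⌊(x + r) * (4 / r)⌋₊

lemma cellN_close {r x y : ℝ} (hr : 0 < r) (hx : |x| ≤ r) (hy : |y| ≤ r) (h : cellN r x = cellN r y) :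
    |y - x| ≤ r / 4 := by
  have hlt : ∀ z : ℝ, |z| ≤ r → ⌊(z + r) * (4 / r)⌋₊ < 9 := by
    intro z hz
    have h2 := (abs_le.1 hz)
    rw [Nat.floor_lt (by have : 0 ≤ z + r := by linarith
                         positivity)]
    calc (z + r) * (4 / r) ≤ (r + r) * (4 / r) := by gcongr; linarith
      _ = 8 := by field_simp; norm_num
      _ < _ := by norm_num
  have h1 : ⌊(x + r) * (4 / r)⌋₊ = ⌊(y + r) * (4 / r)⌋₊ := by
    have := congrArg Fin.val h
    simp only [cellN, Fin.ofNat] at this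
    rwa [Nat.mod_eq_of_lt (hlt x hx), Nat.mod_eq_of_lt (hlt y hy)] at this
  have hx' : 0 ≤ (x + r) * (4 / r) := by
    have := (abs_le.1 hx).1
    have : 0 ≤ x + r := by linarith
    positivity
  have hy' : 0 ≤ (y + r) * (4 / r) := by
    have := (abs_le.1 hy).1
    have : 0 ≤ y + r := by linarith
    positivity
  have a1 := Nat.floor_le hx'
  have a2 := Nat.lt_floor_add_one ((x + r) * (4 / r))
  have b1 := Nat.floor_le hy'
  have b2 := Nat.lt_floor_add_one ((y + r) * (4 / r))
  rw [h1] at a1 a2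
  have h3 : |(y - x) * (4 / r)| ≤ 1 := by
    rw [abs_le]; constructor <;> nlinarith
  rw [abs_mul, abs_of_pos (by positivity : (0:ℝ) < 4 / r)] at h3
  calc |y - x| = |y - x| * (4 / r) * (r / 4) := by field_simp
    _ ≤ 1 * (r / 4) := by gcongr
    _ = r / 4 := one_mul _

/-- the expanding element -/
noncomputable def alI (I : Finset (Fin n)) : Fin n → ℝ := fun a => if a ∈ I then 0 else Real.log 2

lemma Cl_conj {I : Finset (Fin n)} {r η : ℝ} (hη : 0 ≤ η) {g : SLR n} (hg : Cl I r η g)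
    (hg2 : ∀ a ∈ I, ∀ b ∉ I, |dv g a b| ≤ r / 2) : Cl I r η ((dgE (alI I))⁻¹ * g * dgE (alI I)) := by
  intro a b
  rw [dv_conj, abs_mul, abs_of_pos (Real.exp_pos _)]
  have := hg a b
  by_cases ha : a ∈ I <;> by_cases hb : b ∈ I
  · simpa [alI, ha, hb] using this
  · have h2 := hg2 a ha b hb
    simp only [alI, ha, hb, if_true, if_false, sub_zero, not_false_eq_true, and_self]
    rw [Real.exp_log (by norm_num)]
    linarith
  · simp only [alI, ha, hb, if_true, if_false, false_and, zero_sub] at this ⊢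
    rw [Real.exp_neg, Real.exp_log (by norm_num)]
    have := abs_nonneg (dv g a b)
    linarith
  · simpa [alI, ha, hb] using this

/-- close family -/
def ClF (Γ : Subgroup (SLR n)) (I : Finset (Fin n)) (r η : ℝ) : Set (Set (XQuot Γ)) :=
  {W | ∃ S : Set (SLR n), (∀ v ∈ S, ∀ v' ∈ S, Cl I r η (v⁻¹ * v')) ∧ W ⊆ prj Γ '' S}

lemma dv_cocycle (v w : SLR n) (a b : Fin n) :
    dv w a b = dv (v * w) a b - dv v a b - ∑ c, dv v a c * dv w c b := by
  have h : (v * w : SLR n).1 = v.1 * w.1 := rfl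
  have e : (v.1 - 1) * (w.1 - 1) = v.1 * w.1 - v.1 - w.1 + 1 := by noncomm_ring
  have e2 := congrFun (congrFun e a) b
  rw [Matrix.mul_apply] at e2
  simp only [Matrix.sub_apply, Matrix.add_apply] at e2
  simp only [dv, h]
  rw [e2]
  ring

lemma ClF_split {I : Finset (Fin n)} {r η : ℝ} (hr : 0 < r) (hη : 0 ≤ η) (hη2 : n * η ≤ 1 / 4)
    {W : Set (XQuot Γ)} (hW : W ∈ ClF Γ I r η) :
    ∃ V : Fin (Fintype.card (Fin n → Fin n → Fin 9)) → Set (XQuot Γ), W ⊆ (⋃ q, V q) ∧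
      ∀ q, rtQ Γ (dgE (alI I)) '' (V q) ∈ ClF Γ I r η := by
  obtain ⟨S, hS, hWS⟩ := hW
  rcases S.eq_empty_or_nonempty with rfl | ⟨v0, hv0⟩
  · refine ⟨fun _ => ∅, ?_, fun q => ⟨∅, by simp, by simp⟩⟩
    intro x hx
    have := hWS hx
    simp at this
  let e := Fintype.equivFin (Fin n → Fin n → Fin 9)
  let S' : Fin (Fintype.card (Fin n → Fin n → Fin 9)) → Set (SLR n) := fun q =>
    {v | v ∈ S ∧ (fun a b => cellN r (dv (v0⁻¹ * v) a b)) = e.symm q}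
  refine ⟨fun q => prj Γ '' S' q, ?_, fun q => ?_⟩
  · intro x hx
    obtain ⟨v, hv, rfl⟩ := hWS hx
    exact Set.mem_iUnion.2 ⟨e fun a b => cellN r (dv (v0⁻¹ * v) a b), v, ⟨hv, by simp⟩, rfl⟩
  · refine ⟨(fun v => v * dgE (alI I)) '' S' q, ?_, ?_⟩
    · rintro _ ⟨v, hv, rfl⟩ _ ⟨v', hv', rfl⟩
      have : (v * dgE (alI I))⁻¹ * (v' * dgE (alI I)) = (dgE (alI I))⁻¹ * (v⁻¹ * v') * dgE (alI I) := by group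
      simp only [this]
      refine Cl_conj hη (hS v hv.1 v' hv'.1) fun a ha b hb => ?_
      have h1 := hS v0 hv0 v hv.1
      have h2 := hS v0 hv0 v' hv'.1
      have hG := hS v hv.1 v' hv'.1
      have hcell : cellN r (dv (v0⁻¹ * v) a b) = cellN r (dv (v0⁻¹ * v') a b) := by
        have := hv.2.trans hv'.2.symm
        exact congrFun (congrFun this a) b
      have hd := cellN_close hr (by simpa [ha, hb] using h1 a b) (by simpa [ha, hb] using h2 a b) hcell
      rw [dv_cocycle (v0⁻¹ * v) (v⁻¹ * v') a b]
      have e3 : v0⁻¹ * v * (v⁻¹ * v') = v0⁻¹ * v' := by group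
      rw [e3]
      have hsum : |∑ c, dv (v0⁻¹ * v) a c * dv (v⁻¹ * v') c b| ≤ r / 4 := by
        calc _ ≤ ∑ c, |dv (v0⁻¹ * v) a c * dv (v⁻¹ * v') c b| := Finset.abs_sum_le_sum_abs _ _
          _ ≤ ∑ c : Fin n, η * r := by
            refine Finset.sum_le_sum fun c _ => ?_
            rw [abs_mul]
            have q1 := h1 a c
            have q2 := hG c b
            by_cases hc : c ∈ I
            · simp only [ha, hc, hb, not_true_eq_false, and_false, not_false_eq_true, and_self, if_true, if_false] at q1 q2
              exact mul_le_mul q1 q2 (abs_nonneg _) hη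
            · simp only [ha, hc, hb, false_and, not_false_eq_true, and_self, if_true, if_false] at q1 q2
              rw [mul_comm η]
              exact mul_le_mul q1 q2 (abs_nonneg _) hr.le
          _ = n * η * r := by simp; ring
          _ ≤ 1 / 4 * r := by gcongr
          _ = r / 4 := by ring
      calc _ ≤ _ := abs_sub _ _
        _ ≤ r / 4 + r / 4 := add_le_add hd hsum
        _ = r / 2 := by ring
    · rintro _ ⟨_, ⟨v, hv, rfl⟩, rfl⟩
      exact ⟨v * dgE (alI I), ⟨v, hv, rfl⟩, rfl⟩

lemma ClF_cover {I : Finset (Fin n)} {r η : ℝ} (hr : 0 < r) (hη : 0 < η) {K0 : Set (XQuot Γ)}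
    (hK0 : IsCompact K0) : ∃ (C0 : ℕ) (V0 : Fin C0 → Set (XQuot Γ)), K0 ⊆ (⋃ q, V0 q) ∧ ∀ q, V0 q ∈ ClF Γ I r η := by
  have h1 : ∀ᶠ g : SLR n in 𝓝 1, Cl I r η g := by
    filter_upwards [nhds_dv (n := n) (lt_min hr hη)] with g hg a b
    split_ifs
    · exact (hg a b).trans (min_le_left _ _)
    · exact (hg a b).trans (min_le_right _ _)
  have hc : Continuous fun q : SLR n × SLR n => q.1⁻¹ * q.2 := by fun_prop
  have h2 : ∀ᶠ q : SLR n × SLR n in 𝓝 (1, 1), Cl I r η (q.1⁻¹ * q.2) := by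
    have := hc.tendsto (1, 1)
    simp only [inv_one, mul_one] at this
    exact this.eventually h1
  rw [nhds_prod_eq] at h2
  obtain ⟨V, hV, hVcl⟩ := mem_prod_self_iff.1 h2
  choose g hg using prj_surj Γ
  obtain ⟨t, ht, hcov⟩ := hK0.elim_nhds_subcover (fun x => prj Γ '' ((fun v => g x * v) '' V)) (by
    intro x _
    have : (fun v => g x * v) '' V ∈ 𝓝 (g x) := by
      have := (isOpenMap_mul_left (g x)).image_mem_nhds hV
      rwa [mul_one] at this
    have := (prj_oqm Γ).isOpenMap.image_mem_nhds this
    rwa [hg] at this)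
  refine ⟨t.card, fun q => prj Γ '' ((fun v => g (t.equivFin.symm q) * v) '' V), ?_, ?_⟩
  · intro x hx
    obtain ⟨y, hy, hxy⟩ := Set.mem_iUnion₂.1 (hcov hx)
    refine Set.mem_iUnion.2 ⟨t.equivFin ⟨y, hy⟩, ?_⟩
    simpa using hxy
  · intro q
    refine ⟨_, ?_, Set.Subset.rfl⟩
    rintro _ ⟨v, hv, rfl⟩ _ ⟨v', hv', rfl⟩
    have : (g (t.equivFin.symm q) * v)⁻¹ * (g (t.equivFin.symm q) * v') = v⁻¹ * v' := by group
    simp only [this]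
    have h5 : (v, v') ∈ {q : SLR n × SLR n | Cl I r η (q.1⁻¹ * q.2)} := hVcl (Set.mk_mem_prod hv hv')
    exact h5

theorem ksEnt_zero [T2Space (XQuot Γ)] {μ : Measure (XQuot Γ)} [IsProbabilityMeasure μ]
    (hinv : ∀ g, IsPosDiag g → Measure.map (rtQ Γ g) μ = μ) {I : Finset (Fin n)}
    (htr : ∀ i ∈ I, ∀ j ∉ I, TrivU Γ μ (tvs i j)) : ksEntropy (rtQ Γ (dgE (alI I))) μ = 0 := by
  classical
  unfold ksEntropy
  simp only [ENNReal.iSup_eq_zero]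
  intro p P hP
  have hT : MeasurePreserving (rtQ Γ (dgE (alI I))) μ μ := ⟨(rtQ_act Γ).meas _, hinv _ (dgE_pos _)⟩
  refine ent_zero hT hP (c := Fintype.card (Fin n → Fin n → Fin 9)) fun β hβ => ?_
  -- compact labels
  have hQ : ∀ i, ∃ Q ⊆ P i, IsCompact Q ∧ μ (P i \ Q) < ENNReal.ofReal (β / 2 / (p + 1)) := fun i =>
    (hP.1 i).exists_isCompact_diff_lt (measure_ne_top _ _) (by simp; positivity)
  choose Q hQP hQc hQμ using hQ
  have hQd : Pairwise (Function.onFun Disjoint Q) := fun i j h =>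
    (hP.2.1 h).mono (hQP i) (hQP j)
  obtain ⟨r, hr, hrQ⟩ := label_radius hQc hQd
  have hK : ∀ i j, ∃ K : Set (XQuot Γ), MeasurableSet K ∧ μ Kᶜ ≤ ENNReal.ofReal (β / 2 / (n * n + 1)) ∧ ∃ η0 > 0,
      i ∈ I → j ∉ I → ∀ η ≤ η0, ∀ x ∈ K, ∀ g, Cl I r η g → r / 2 ≤ |dv g i j| → rtQ Γ g x ∉ K := by
    intro i j
    by_cases hij : i ∈ I ∧ j ∉ I
    · obtain ⟨K, a, b, η0, c, d⟩ := no_pair hinv hij.1 hij.2 (htr i hij.1 j hij.2) hr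
        (show 0 < β / 2 / (n * n + 1) by positivity)
      exact ⟨K, a, b, η0, c, fun _ _ => d⟩
    · exact ⟨Set.univ, MeasurableSet.univ, by simp, 1, one_pos, fun h h' => absurd ⟨h, h'⟩ hij⟩
  choose K hKm hKμ η0 hη0 hKp using hK
  obtain ⟨η, hη, hηr, hη4, hη0'⟩ : ∃ η : ℝ, 0 < η ∧ η ≤ r ∧ n * η ≤ 1 / 4 ∧ ∀ i j, η ≤ η0 i j := by
    have : ∀ᶠ η : ℝ in 𝓝[>] 0, 0 < η ∧ η ≤ r ∧ n * η ≤ 1 / 4 ∧ ∀ i j, η ≤ η0 i j := by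
      refine (eventually_mem_nhdsWithin).and (Eventually.and ?_ (Eventually.and ?_ ?_))
      · exact nhdsWithin_le_nhds (eventually_le_nhds hr)
      · refine nhdsWithin_le_nhds ?_
        have : Tendsto (fun η : ℝ => (n : ℝ) * η) (𝓝 0) (𝓝 (n * 0)) := by
          exact (continuous_const.mul continuous_id).tendsto 0
        rw [mul_zero] at this
        exact this.eventually (eventually_le_nhds (by norm_num))
      · rw [eventually_all]; intro i
        rw [eventually_all]; intro j
        exact nhdsWithin_le_nhds (eventually_le_nhds (hη0 i j))
    exact this.exists
  obtain ⟨K0, -, hK0c, hK0μ⟩ := (MeasurableSet.univ (α := XQuot Γ)).exists_isCompact_diff_lt (μ := μ)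
    (measure_ne_top _ _) (show ENNReal.ofReal β ≠ 0 by simpa using hβ)
  rw [← Set.compl_eq_univ_sdiff] at hK0μ
  obtain ⟨C0, V0, hV0, hV0W⟩ := ClF_cover (I := I) hr hη hK0c
  refine ⟨(⋃ i, Q i) ∩ ⋂ i, ⋂ j, K i j, K0, ClF Γ I r η, C0, V0, ?_, ?_, hK0μ.le, hV0, hV0W, ?_, ?_, ?_, ?_⟩
  · exact (MeasurableSet.iUnion fun i => (hQc i).measurableSet).inter
      (MeasurableSet.iInter fun i => MeasurableSet.iInter fun j => hKm i j)
  · have hsub : ((⋃ i, Q i) ∩ ⋂ i, ⋂ j, K i j)ᶜ ⊆ (⋃ i, P i)ᶜ ∪ ((⋃ i, P i \ Q i) ∪ ⋃ i, ⋃ j, (K i j)ᶜ) := by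
      intro x hx
      by_contra hcon
      simp only [Set.mem_union, not_or] at hcon
      obtain ⟨h1, h2, h3⟩ := hcon
      obtain ⟨i, hi⟩ := Set.mem_iUnion.1 (not_not.1 h1)
      simp only [Set.mem_iUnion, Set.mem_compl_iff, not_not, not_exists, Set.mem_diff, not_and] at h2 h3
      exact hx ⟨Set.mem_iUnion.2 ⟨i, h2 i hi⟩, Set.mem_iInter.2 fun i => Set.mem_iInter.2 fun j => h3 i j⟩
    calc _ ≤ _ := measure_mono hsub
      _ ≤ 0 + (∑ i : Fin p, ENNReal.ofReal (β / 2 / (p + 1)) +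
          ∑ i : Fin n, ∑ j : Fin n, ENNReal.ofReal (β / 2 / (n * n + 1))) := by
        refine (measure_union_le _ _).trans (add_le_add hP.2.2.le ((measure_union_le _ _).trans (add_le_add ?_ ?_)))
        · exact (measure_iUnion_fintype_le _ _).trans (Finset.sum_le_sum fun i _ => (hQμ i).le)
        · refine (measure_iUnion_fintype_le _ _).trans (Finset.sum_le_sum fun i _ => ?_)
          exact (measure_iUnion_fintype_le _ _).trans (Finset.sum_le_sum fun j _ => hKμ i j)
      _ = ENNReal.ofReal (p * (β / 2 / (p + 1)) + n * (n * (β / 2 / (n * n + 1)))) := by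
        rw [zero_add, ENNReal.ofReal_add (by positivity) (by positivity), ENNReal.ofReal_mul (by positivity),
          ENNReal.ofReal_mul (by positivity), ENNReal.ofReal_mul (by positivity)]
        simp
      _ ≤ ENNReal.ofReal β := by
        refine ENNReal.ofReal_le_ofReal ?_
        have e1 : (p : ℝ) * (β / 2 / (p + 1)) ≤ β / 2 := by
          rw [mul_div_assoc', div_le_iff₀ (by positivity)]; nlinarith
        have e2 : (n : ℝ) * (n * (β / 2 / (n * n + 1))) ≤ β / 2 := by
          rw [← mul_assoc, mul_div_assoc', div_le_iff₀ (by positivity)]; nlinarith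
        linarith
  · rintro W ⟨S, hS, hWS⟩ W' hW'
    exact ⟨S, hS, hW'.trans hWS⟩
  · rintro W ⟨S, hS, hWS⟩
    refine ⟨(fun v => v * dgE (alI I)) '' {v | v ∈ S ∧ prj Γ v ∈ (⋃ i, Q i) ∩ ⋂ i, ⋂ j, K i j}, ?_, ?_⟩
    · rintro _ ⟨v, ⟨hv, hvE⟩, rfl⟩ _ ⟨v', ⟨hv', hvE'⟩, rfl⟩
      have : (v * dgE (alI I))⁻¹ * (v' * dgE (alI I)) = (dgE (alI I))⁻¹ * (v⁻¹ * v') * dgE (alI I) := by group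
      simp only [this]
      refine Cl_conj hη.le (hS v hv v' hv') fun a ha b hb => ?_
      by_contra hcon
      push Not at hcon
      refine hKp a b ha hb η (hη0' a b) (prj Γ v) (Set.mem_iInter.1 (Set.mem_iInter.1 hvE.2 a) b) _ (hS v hv v' hv') hcon.le ?_
      rw [rtQ_prj, mul_inv_cancel_left]
      exact Set.mem_iInter.1 (Set.mem_iInter.1 hvE'.2 a) b
    · rintro _ ⟨x, ⟨hx, hxE⟩, rfl⟩
      obtain ⟨v, hv, rfl⟩ := hWS hx
      exact ⟨_, ⟨v, ⟨hv, hxE⟩, rfl⟩, rfl⟩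
  · rintro W ⟨S, hS, hWS⟩ y ⟨hy, hyE⟩ y' ⟨hy', hyE'⟩ i j hyi hyj
    obtain ⟨v, hv, rfl⟩ := hWS hy
    obtain ⟨v', hv', rfl⟩ := hWS hy'
    obtain ⟨i', hi'⟩ := Set.mem_iUnion.1 hyE.1
    obtain ⟨j', hj'⟩ := Set.mem_iUnion.1 hyE'.1
    have hii : i' = i := by
      by_contra h
      exact Set.disjoint_left.1 (hP.2.1 h) (hQP _ hi') hyi
    have hjj : j' = j := by
      by_contra h
      exact Set.disjoint_left.1 (hP.2.1 h) (hQP _ hj') hyj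
    rw [← hii, ← hjj]
    refine hrQ (v⁻¹ * v') (fun a b => (hS v hv v' hv' a b).trans ?_) i' j' _ hi' ?_
    · split_ifs
      · exact le_rfl
      · exact hηr
    · rw [rtQ_prj, mul_inv_cancel_left]
      exact hj'
  · intro W hW
    exact ClF_split hr hη.le hη4 hW
end Geo2

open MeasureTheory ENNReal Filter Topology

section Asm
variable {n : ℕ}

lemma tvs_add {i j : Fin n} (s t : ℝ) : tvs i j (s + t) = tvs i j s * tvs i j t := by
  unfold tvs
  split_ifs with h
  · exact Matrix.SpecialLinearGroup.transvection_add h s t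
  · simp

lemma tvs_zero (i j : Fin n) : tvs i j 0 = 1 := by
  unfold tvs
  split_ifs with h
  · simp
  · rfl

lemma tvs_comm {i j k : Fin n} (hij : i ≠ j) (hjk : j ≠ k) (hik : i ≠ k) (s t : ℝ) :
    tvs i j s * tvs j k t = tvs j k t * tvs i j s * tvs i k (s * t) := by
  apply Subtype.ext
  simp only [Matrix.SpecialLinearGroup.coe_mul, tvs_coe hij, tvs_coe hjk, tvs_coe hik]
  simp only [add_mul, mul_add, one_mul, mul_one, Matrix.single_mul_single_same,
    Matrix.single_mul_single_of_ne _ _ _ _ hik.symm, Matrix.single_mul_single_of_ne _ _ _ _ hij.symm,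
    zero_mul]
  abel

lemma tvs_conj {i j : Fin n} (hij : i ≠ j) (α : Fin n → ℝ) (s : ℝ) :
    (dgE α)⁻¹ * tvs i j s * dgE α = tvs i j (Real.exp (α j - α i) * s) := by
  apply Subtype.ext
  ext a b
  have h := dv_conj α (tvs i j s) a b
  rw [dv_tvs hij] at h
  have h2 := dv_tvs hij (Real.exp (α j - α i) * s) a b
  unfold dv at h h2
  have : (if i = a ∧ j = b then Real.exp (α j - α i) * s else 0) =
      Real.exp (α b - α a) * (if i = a ∧ j = b then s else 0) := by
    split_ifs with h
    · rw [h.1, h.2]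
    · simp
  rw [this, ← h] at h2
  linarith

lemma tvs_dgE {i j : Fin n} (hij : i ≠ j) (α : Fin n → ℝ) (s : ℝ) :
    tvs i j s * dgE α = dgE α * tvs i j (Real.exp (α j - α i) * s) := by
  rw [← tvs_conj hij]; group

lemma dgE_pow (α : Fin n → ℝ) (m : ℕ) : dgE α ^ m = dgE (fun i => m * α i) := by
  induction m with
  | zero =>
    have : (fun i => ((0 : ℕ) : ℝ) * α i) = 0 := by funext i; simp
    rw [this, dgE_zero, pow_zero]
  | succ m ih =>
    rw [pow_succ, ih, ← dgE_add]
    congr 1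
    funext i
    simp only [Pi.add_apply]
    push_cast
    ring

lemma contr_tvs {i j : Fin n} (hij : i ≠ j) {α : Fin n → ℝ} (h : α j < α i) (s : ℝ) :
    Contr (dgE α) (tvs i j s) := by
  unfold Contr
  have e : ∀ m : ℕ, (dgE α ^ m)⁻¹ * tvs i j s * dgE α ^ m = tvs i j ((Real.exp (α j - α i)) ^ m * s) := by
    intro m
    rw [dgE_pow, tvs_conj hij, ← Real.exp_nat_mul]
    congr 3
    ring
  simp only [e]
  have h1 : Tendsto (fun m : ℕ => (Real.exp (α j - α i)) ^ m * s) atTop (𝓝 (0 * s)) :=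
    (_root_.tendsto_pow_atTop_nhds_zero_of_lt_one (Real.exp_pos _).le (by rw [Real.exp_lt_one_iff]; linarith)).mul_const s
  rw [zero_mul] at h1
  have h2 := ((tvs_cont i j).tendsto 0).comp h1
  rwa [tvs_zero] at h2

/-- diagonal subgroup -/
noncomputable def HD (n : ℕ) : Subgroup (SLR n) where
  carrier := {g | ∃ α, dgE α = g}
  one_mem' := ⟨0, dgE_zero⟩
  mul_mem' := by
    rintro _ _ ⟨α, rfl⟩ ⟨β, rfl⟩
    exact ⟨α + β, dgE_add α β⟩
  inv_mem' := by
    rintro _ ⟨α, rfl⟩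
    exact ⟨-α, (dgE_inv α).symm⟩

variable {Γ : Subgroup (SLR n)}

lemma nontriv_pairs [T2Space (XQuot Γ)] {μ : Measure (XQuot Γ)} [IsProbabilityMeasure μ] {u : ℝ → SLR n}
    (h : ¬ TrivU Γ μ u) : ∃ δ : ℝ, 0 < δ ∧ ∀ Z : Set (XQuot Γ), MeasurableSet Z → ENNReal.ofReal (1 - δ) < μ Z →
      ∃ z ∈ Z, ∃ s : ℝ, s ≠ 0 ∧ rtQ Γ (u s) z ∈ Z := by
  unfold TrivU at h
  push Not at h
  obtain ⟨δ, hδ, h⟩ := h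
  refine ⟨δ, hδ, fun Z hZ hZμ => ?_⟩
  obtain ⟨K, hKZ, hK, hKμ⟩ := hZ.exists_lt_isCompact_of_ne_top (measure_ne_top _ _) hZμ
  obtain ⟨x, hx, s, hs, hxs⟩ := h K hK (by
    rw [prob_compl_eq_one_sub hK.measurableSet, tsub_le_iff_right]
    calc (1 : ℝ≥0∞) = ENNReal.ofReal (δ + (1 - δ)) := by simp
      _ ≤ ENNReal.ofReal δ + ENNReal.ofReal (1 - δ) := ENNReal.ofReal_add_le
      _ ≤ _ := by gcongr)
  exact ⟨x, hKZ hx, s, hs, hKZ hxs⟩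

lemma nontriv_of_inv [T2Space (XQuot Γ)] {μ : Measure (XQuot Γ)} [IsProbabilityMeasure μ] {u : ℝ → SLR n}
    (h : ∀ s, Measure.map (rtQ Γ (u s)) μ = μ) : ¬ TrivU Γ μ u := by
  intro ht
  obtain ⟨K, hK, hKμ, hp⟩ := ht (1/4) (by norm_num)
  have h2 : μ (rtQ Γ (u 1) ⁻¹' K)ᶜ ≤ ENNReal.ofReal (1/4) := by
    rw [← Set.preimage_compl, ← Measure.map_apply ((rtQ_act Γ).meas _) hK.measurableSet.compl, h 1]
    exact hKμ
  have h3 : μ (K ∩ rtQ Γ (u 1) ⁻¹' K)ᶜ < 1 := by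
    rw [Set.compl_inter]
    refine (measure_union_le _ _).trans_lt ((add_le_add hKμ h2).trans_lt ?_)
    rw [← ENNReal.ofReal_add (by norm_num) (by norm_num), ← ENNReal.ofReal_one]
    exact (ENNReal.ofReal_lt_ofReal_iff one_pos).2 (by norm_num)
  have h4 : (K ∩ rtQ Γ (u 1) ⁻¹' K).Nonempty := by
    by_contra hne
    rw [Set.not_nonempty_iff_eq_empty] at hne
    rw [hne] at h3
    simp at h3
  obtain ⟨x, hx, hx'⟩ := h4
  exact hp x hx 1 one_ne_zero hx'

lemma step_inv [T2Space (XQuot Γ)] {μ : Measure (XQuot Γ)} [IsProbabilityMeasure μ]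
    (hinv : ∀ g : SLR n, IsPosDiag g → Measure.map (rtQ Γ g) μ = μ)
    (herg : ∀ A : Set (XQuot Γ), MeasurableSet A →
      (∀ g : SLR n, IsPosDiag g → rtQ Γ g ⁻¹' A = A) → μ A = 0 ∨ μ A = 1)
    {i j k : Fin n} (hij : i ≠ j) (hjk : j ≠ k) (hik : i ≠ k)
    (h1 : ¬ TrivU Γ μ (tvs i j)) (h2 : ¬ TrivU Γ μ (tvs j k)) (s : ℝ) :
    Measure.map (rtQ Γ (tvs i k s)) μ = μ := by
  obtain ⟨δ1, hδ1, hp1⟩ := nontriv_pairs h1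
  obtain ⟨δ2, hδ2, hp2⟩ := nontriv_pairs h2
  let β : Fin n → ℝ := Pi.single j (-1)
  let γ : Fin n → ℝ := Pi.single k (-1)
  have hβj : β j = -1 := by simp [β]
  have hβi : β i = 0 := by simp [β, hij]
  have hβk : β k = 0 := by simp [β, hjk.symm]
  have hγk : γ k = -1 := by simp [γ]
  have hγi : γ i = 0 := by simp [γ, hik]
  have hγj : γ j = 0 := by simp [γ, hjk]
  refine lemC (rtQ_act Γ) (b := dgE β) (c := dgE γ) (u := tvs i j) (v := tvs j k) (w := tvs i k)
    (tvs_cont i j) tvs_add (tvs_cont i k) tvs_add ?_ ?_ ?_ ?_ ?_ (tvs_comm hij hjk hik) (HD n)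
    ⟨γ, rfl⟩ ⟨β, rfl⟩ ?_ ?_ ?_ ?_ ?_ ?_ (B := fun m => dgE '' Metric.closedBall 0 (m : ℝ)) ?_ ?_ ?_ ?_ ?_ ?_ hδ2 hp2 s
  · intro s; rw [tvs_dgE hij, hγi, hγj]; simp
  · intro s; rw [tvs_dgE hik, hβi, hβk]; simp
  · intro s; exact contr_tvs hij (by rw [hβi, hβj]; norm_num) s
  · intro s; rw [dgE_inv]; exact contr_tvs hjk (by simp only [Pi.neg_apply]; rw [hβk, hβj]; norm_num) s
  · intro s; exact contr_tvs hjk (by rw [hγk, hγj]; norm_num) s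
  · rintro _ ⟨α, rfl⟩ _ ⟨α', rfl⟩; rw [← dgE_add, ← dgE_add, add_comm]
  · rintro _ ⟨α, rfl⟩; exact hinv _ (dgE_pos α)
  · intro A hA hA'
    exact herg A hA fun g hg => hA' g ⟨_, dgE_surj hg⟩
  · rintro _ ⟨α, rfl⟩; exact ⟨_, Real.exp_pos _, fun s => tvs_dgE hij α s⟩
  · rintro _ ⟨α, rfl⟩; exact ⟨_, Real.exp_pos _, fun s => tvs_dgE hik α s⟩
  · intro l hl
    refine ⟨dgE (Pi.single k (Real.log l)), ⟨_, rfl⟩, fun s => ?_⟩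
    rw [tvs_dgE hik]
    simp [hik, Real.exp_log hl]
  · intro m; exact (isCompact_closedBall _ _).image dgE_cont
  · intro m m' h
    exact Set.image_mono (Metric.closedBall_subset_closedBall (by exact_mod_cast h))
  · exact ⟨0, by simp, dgE_zero⟩
  · rintro m _ ⟨α, -, rfl⟩; exact ⟨α, rfl⟩
  · rintro _ ⟨α, rfl⟩ m
    obtain ⟨m', hm'⟩ := exists_nat_ge ((m : ℝ) + ‖α‖)
    refine ⟨m', ?_⟩
    rintro _ ⟨α', hα', rfl⟩
    refine ⟨α' + α, ?_, dgE_add α' α⟩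
    rw [mem_closedBall_zero_iff] at hα' ⊢
    exact (norm_add_le _ _).trans (by linarith)
  · intro Z hZ hZμ
    refine hp1 Z hZ ?_
    rw [prob_compl_eq_zero_iff hZ] at hZμ
    rw [hZμ, ← ENNReal.ofReal_one]
    exact (ENNReal.ofReal_lt_ofReal_iff one_pos).2 (by linarith)

lemma diag2n_eq {i j : Fin n} (hij : i ≠ j) {c : ℝ} (hc : c ≠ 0) :
    Matrix.SpecialLinearGroup.diag2n hij c hc =
      tvs i j (c - 1) * tvs j i 1 * tvs i j (c⁻¹ - 1) * tvs j i (-c) := by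
  apply Subtype.ext
  have hd : (Matrix.diagonal fun k => if k = i then c else if k = j then c⁻¹ else (1:ℝ)) =
      (1 : Matrix (Fin n) (Fin n) ℝ) + (c - 1) • Matrix.single i i (1:ℝ) + (c⁻¹ - 1) • Matrix.single j j (1:ℝ) := by
    ext a b
    rcases eq_or_ne a b with rfl | h
    · simp only [Matrix.diagonal_apply_eq, Matrix.add_apply, Matrix.one_apply_eq, Matrix.smul_apply,
        Matrix.single_apply, smul_eq_mul]
      by_cases h1 : a = i
      · subst h1
        simp [hij.symm]
      · by_cases h2 : a = j
        · subst h2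
          simp [hij, hij.symm]
        · simp [h1, h2, Ne.symm h1, Ne.symm h2]
    · simp only [Matrix.diagonal_apply_ne _ h, Matrix.add_apply, Matrix.one_apply_ne h, Matrix.smul_apply,
        Matrix.single_apply, smul_eq_mul]
      have h1 : ¬ (i = a ∧ i = b) := fun q => h (q.1.symm.trans q.2)
      have h2 : ¬ (j = a ∧ j = b) := fun q => h (q.1.symm.trans q.2)
      simp [h1, h2]
  have hs : ∀ (a b : Fin n) (t : ℝ), Matrix.single a b t = t • Matrix.single a b (1:ℝ) := by
    intro a b t; rw [Matrix.smul_single]; simp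
  rw [Matrix.SpecialLinearGroup.diag2n_coe, hd]
  simp only [Matrix.SpecialLinearGroup.coe_mul, tvs_coe hij, tvs_coe hij.symm]
  rw [hs i j (c - 1), hs i j (c⁻¹ - 1), hs j i (-c)]
  simp only [add_mul, mul_add, one_mul, mul_one, Matrix.single_mul_single_same, smul_mul_assoc, mul_smul_comm,
    Matrix.single_mul_single_of_ne _ _ _ _ hij, Matrix.single_mul_single_of_ne _ _ _ _ hij.symm,
    zero_mul, smul_zero, add_zero]
  match_scalars <;> field_simp <;> ring

lemma all_inv [T2Space (XQuot Γ)] (hn : 3 ≤ n) {μ : Measure (XQuot Γ)}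
    (h : ∀ i j : Fin n, i ≠ j → ∀ s, Measure.map (rtQ Γ (tvs i j s)) μ = μ) (g : SLR n) :
    Measure.map (rtQ Γ g) μ = μ := by
  haveI : Nontrivial (Fin n) := Fin.nontrivial_iff_two_le.2 (by omega)
  have hmul : ∀ A B : SLR n, Measure.map (rtQ Γ A) μ = μ → Measure.map (rtQ Γ B) μ = μ →
      Measure.map (rtQ Γ (A * B)) μ = μ := by
    intro A B hA hB
    have : rtQ Γ (A * B) = rtQ Γ B ∘ rtQ Γ A := by funext x; exact (rtQ_act Γ).mul A B x
    rw [this, ← Measure.map_map ((rtQ_act Γ).meas B) ((rtQ_act Γ).meas A), hA, hB]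
  refine Matrix.SpecialLinearGroup.diagonal_transvection_induction'
    (fun g : SLR n => Measure.map (rtQ Γ g) μ = μ) g ?_ ?_ hmul
  · intro i j hij c hc
    rw [diag2n_eq hij hc]
    exact hmul _ _ (hmul _ _ (hmul _ _ (h i j hij _) (h j i hij.symm _)) (h i j hij _)) (h j i hij.symm _)
  · intro i j hij a
    have := h i j hij a
    rwa [tvs, dif_pos hij] at this

end Asm

/-- Einsiedler–Katok: Let `n ≥ 3`, `G = SL(n,ℝ)`, `Γ < G` discrete, and
`H` the positive diagonal subgroup.  If `μ` is an `H`-invariant and `H`-ergodic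
probability measure on `Γ\G` whose entropy with respect to every nontrivial
one-parameter subgroup of `H` is positive, then `μ` is the `G`-invariant probability
measure on `Γ\G` (so in particular `Γ` is a lattice). -/
theorem einsiedler_katok_positive_entropy_measures
    (n : ℕ) (hn : 3 ≤ n) (Γ : Subgroup (SLR n)) (hΓ : DiscreteTopology Γ)
    (μ : Measure (XQuot Γ)) [IsProbabilityMeasure μ]
    (hinv : ∀ g : SLR n, IsPosDiag g → Measure.map (rtQ Γ g) μ = μ)
    (herg : ∀ A : Set (XQuot Γ), MeasurableSet A →
      (∀ g : SLR n, IsPosDiag g → rtQ Γ g ⁻¹' A = A) → μ A = 0 ∨ μ A = 1)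
    (hent : ∀ a : ℝ → SLR n, (∀ s t, a (s + t) = a s * a t) → Continuous a →
      (∀ t, IsPosDiag (a t)) → (∃ t, a t ≠ 1) →
      0 < ksEntropy (rtQ Γ (a 1)) μ) :
    ∀ g : SLR n, Measure.map (rtQ Γ g) μ = μ := by
  classical
  haveI : T2Space (XQuot Γ) := xq_t2 Γ hΓ
  have hcross : ∀ I : Finset (Fin n), ∀ i0 ∈ I, ∀ j0 ∉ I, ∃ i ∈ I, ∃ j ∉ I, ¬ TrivU Γ μ (tvs i j) := by
    intro I i0 hi0 j0 hj0
    by_contra hcon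
    push Not at hcon
    have h0 := ksEnt_zero hinv hcon
    have hpos := hent (fun t => dgE (t • alI I)) (fun s t => by rw [add_smul, dgE_add])
      (dgE_cont.comp (by fun_prop)) (fun t => dgE_pos _) ⟨1, by
        intro h1
        rw [one_smul] at h1
        have e1 := congrArg (fun g : SLR n => (g : Matrix (Fin n) (Fin n) ℝ) i0 i0) h1
        have e2 := congrArg (fun g : SLR n => (g : Matrix (Fin n) (Fin n) ℝ) j0 j0) h1
        simp only [dgE_coe, Matrix.diagonal_apply_eq, Matrix.SpecialLinearGroup.coe_one, Matrix.one_apply_eq,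
          Real.exp_eq_one_iff] at e1 e2
        have e3 : alI I i0 = alI I j0 := by linarith
        simp only [alI, hi0, hj0, if_true, if_false] at e3
        have := Real.log_pos (by norm_num : (1:ℝ) < 2)
        linarith⟩
    simp only [one_smul] at hpos
    rw [h0] at hpos
    exact lt_irrefl _ hpos
  have hall : ∀ i j : Fin n, i ≠ j → ¬ TrivU Γ μ (tvs i j) := by
    intro i j hij hT
    let I : Finset (Fin n) := Finset.univ.filter fun x => x = i ∨ ¬ TrivU Γ μ (tvs i x)
    have hI : ∀ x, x ∈ I ↔ x = i ∨ ¬ TrivU Γ μ (tvs i x) := by intro x; simp [I]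
    obtain ⟨a, ha, b, hb, hab⟩ := hcross I i ((hI i).2 (Or.inl rfl)) j (by
      rw [hI]; push Not; exact ⟨hij.symm, hT⟩)
    rw [hI] at ha hb
    push Not at hb
    by_cases hai : a = i
    · rw [hai] at hab; exact hab hb.2
    · have hia : ¬ TrivU Γ μ (tvs i a) := ha.resolve_left hai
      have hab' : a ≠ b := by
        rintro rfl; exact hia hb.2
      exact nontriv_of_inv (step_inv hinv herg (Ne.symm hai) hab' (Ne.symm hb.1) hia hab) hb.2
  refine all_inv hn fun i k hik s => ?_
  obtain ⟨j, hj⟩ : ∃ j : Fin n, j ∉ ({i, k} : Finset (Fin n)) := by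
    by_contra hcon
    push Not at hcon
    have h1 : (Finset.univ : Finset (Fin n)) ⊆ {i, k} := fun x _ => hcon x
    have h2 := Finset.card_le_card h1
    have h3 : ({i, k} : Finset (Fin n)).card ≤ 2 := Finset.card_le_two
    simp only [Finset.card_univ, Fintype.card_fin] at h2
    omega
  simp only [Finset.mem_insert, Finset.mem_singleton, not_or] at hj
  exact step_inv hinv herg (Ne.symm hj.1) hj.2 hik (hall i j (Ne.symm hj.1)) (hall j k hj.2) s
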